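/- arXiv:1311.3190 — 3 statements merged into one kernel-verified Lean document; each statement's English description precedes it below -/
import Mathlib

section
/- Let F and G be continuous cumulative distribution functions on ℝ with G ≠ F, and let X_1, ..., X_n be i.i.d. with distribution G. Then for any ε > 0, the probability P( M_n(F(X_1), ..., F(X_n)) < (1+ε) / (4 ‖G-F‖_∞^2 · n) ) converges to 1 as n → ∞, where ‖G-F‖_∞ = sup_{t∈ℝ} |G(t)-F(t)|. -/
open MeasureTheory Filter Set

noncomputable section

/-- Density of the Beta(a,b) distribution on [0,1]. -/
def betaPDF (a b x : ℝ) : ℝ :=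
  x ^ (a - 1) * (1 - x) ^ (b - 1) / (Real.Gamma a * Real.Gamma b / Real.Gamma (a + b))

/-- Regularized incomplete beta function `I_x(a,b) = P(Beta(a,b) < x)`. -/
def regIncBeta (a b x : ℝ) : ℝ := ∫ t in Set.Ioc (0:ℝ) x, betaPDF a b t

/-- The `i`-th order statistic (0-based) of the sample `u`. -/
def orderStat {n : ℕ} (u : Fin n → ℝ) (i : Fin n) : ℝ := u (Tuple.sort u i)

/-- `p_{(i)} = P(Beta(i, n-i+1) < u_{(i)})` (with 1-based index `i = (i : Fin n) + 1`). -/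
def pOrd {n : ℕ} (u : Fin n → ℝ) (i : Fin n) : ℝ :=
  regIncBeta ((i : ℕ) + 1 : ℝ) ((n : ℝ) - (i : ℕ)) (orderStat u i)

/-- One-sided exact Berk-Jones statistic `M_n^+`. -/
def MnPlus {n : ℕ} (u : Fin n → ℝ) : ℝ := ⨅ i, pOrd u i

/-- One-sided exact Berk-Jones statistic `M_n^-`. -/
def MnMinus {n : ℕ} (u : Fin n → ℝ) : ℝ := ⨅ i, (1 - pOrd u i)

/-- Two-sided exact Berk-Jones statistic `M_n`. -/
def Mn {n : ℕ} (u : Fin n → ℝ) : ℝ := min (MnPlus u) (MnMinus u)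

/-- Joint law of `n` i.i.d. `U[0,1]` random variables (the null hypothesis). -/
def nullMeasure (n : ℕ) : Measure (Fin n → ℝ) :=
  Measure.pi fun _ => MeasureTheory.volume.restrict (Set.Icc (0:ℝ) 1)

end

/-- `F` is a continuous cumulative distribution function on ℝ. -/
def IsContinuousCDF (F : ℝ → ℝ) : Prop :=
  Continuous F ∧ Monotone F ∧
    Filter.Tendsto F Filter.atBot (nhds 0) ∧ Filter.Tendsto F Filter.atTop (nhds 1)

/-! The beta law with parameters `k` and `n - k + 1` has mean `k / (n + 1)` and variance at most
`1 / (4 * (n + 2))`. Hence, by Chebyshev's inequality, `M_n ≤ 1 / (4 * (n + 2) * c ^ 2)` as soon as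
some order statistic is at distance at least `c` from its mean under uniformity. Take
`c = ‖G - F‖ / √(1 + ε)` and `t` with `c < |G t - F t|`. By the weak law of large numbers, with high
probability the number `N` of sample points at most `t` is about `n * G t`. If `F t < G t`, the
`N`-th order statistic of the transformed sample is at most `F t`, while its mean under uniformity
is close to `G t`; if `G t < F t`, the `(N + 1)`-th one is at least `F t`, and again its mean is
close to `G t`. -/

section Chebyshev

open ProbabilityTheory

lemma measureReal_ge_le_variance_div_sq {Ω : Type*} [MeasurableSpace Ω] {μ : Measure Ω}
    [IsFiniteMeasure μ] {X : Ω → ℝ} (hX : MemLp X 2 μ) {c : ℝ} (hc : 0 < c) :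
    μ.real {ω | c ≤ |X ω - μ[X]|} ≤ variance X μ / c ^ 2 :=
  ENNReal.toReal_le_of_le_ofReal (div_nonneg (variance_nonneg X μ) (sq_nonneg c))
    (meas_ge_le_variance_div_sq hX hc)

end Chebyshev

section Beta

open ProbabilityTheory (beta beta_pos betaMeasure betaPDFReal betaPDFReal_pos cdf cdf_eq_real
  isProbabilityMeasureBeta measurable_betaPDFReal variance variance_eq_sub)

variable {a b : ℝ}

lemma beta_add_one_left (ha : 0 < a) (hb : 0 < b) : beta (a + 1) b = a / (a + b) * beta a b := by
  have hab : a + b ≠ 0 := (add_pos ha hb).ne'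
  have hΓ : Real.Gamma (a + b) ≠ 0 := (Real.Gamma_pos_of_pos (add_pos ha hb)).ne'
  rw [beta, beta, add_right_comm, Real.Gamma_add_one ha.ne', Real.Gamma_add_one hab]
  field_simp

lemma betaPDFReal_nonneg (ha : 0 < a) (hb : 0 < b) (x : ℝ) : 0 ≤ betaPDFReal a b x := by
  by_cases hx : 0 < x ∧ x < 1
  · exact (betaPDFReal_pos hx.1 hx.2 ha hb).le
  · rw [betaPDFReal, if_neg hx]

lemma betaPDFReal_mul_self (ha : 0 < a) (hb : 0 < b) (x : ℝ) :
    betaPDFReal a b x * x = a / (a + b) * betaPDFReal (a + 1) b x := by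
  by_cases hx : 0 < x ∧ x < 1
  · have hbeta : beta a b ≠ 0 := (beta_pos ha hb).ne'
    have hab : a + b ≠ 0 := (add_pos ha hb).ne'
    have hpow : x ^ a = x ^ (a - 1) * x := by rw [← Real.rpow_add_one hx.1.ne', sub_add_cancel]
    rw [betaPDFReal, betaPDFReal, if_pos hx, if_pos hx, beta_add_one_left ha hb,
      add_sub_cancel_right, hpow]
    field_simp
  · simp only [betaPDFReal, if_neg hx, zero_mul, mul_zero]

lemma measurable_betaPDF (a b : ℝ) : Measurable (ProbabilityTheory.betaPDF a b) :=
  (measurable_betaPDFReal a b).ennreal_ofReal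

lemma integral_betaMeasure (ha : 0 < a) (hb : 0 < b) (f : ℝ → ℝ) :
    ∫ x, f x ∂betaMeasure a b = ∫ x, betaPDFReal a b x * f x := by
  rw [betaMeasure, integral_withDensity_eq_integral_toReal_smul
    (measurable_betaPDF a b) (ae_of_all _ fun _ => ENNReal.ofReal_lt_top)]
  simp only [ProbabilityTheory.betaPDF, ENNReal.toReal_ofReal (betaPDFReal_nonneg ha hb _),
    smul_eq_mul]

lemma ae_betaMeasure_mem_Icc (a b : ℝ) : ∀ᵐ x ∂betaMeasure a b, x ∈ Icc (0 : ℝ) 1 := by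
  rw [betaMeasure, ae_withDensity_iff (measurable_betaPDF a b)]
  refine ae_of_all _ fun x hx => ⟨?_, ?_⟩
  · exact (not_le.1 fun h => hx (ProbabilityTheory.betaPDF_eq_zero_of_nonpos h)).le
  · exact (not_le.1 fun h => hx (ProbabilityTheory.betaPDF_eq_zero_of_one_le h)).le

lemma memLp_id_betaMeasure (ha : 0 < a) (hb : 0 < b) : MemLp id 2 (betaMeasure a b) :=
  have := isProbabilityMeasureBeta ha hb
  memLp_of_bounded (ae_betaMeasure_mem_Icc a b) aestronglyMeasurable_id 2

-- Size-biasing a Beta(a, b) variable gives a Beta(a + 1, b) variable; this yields all moments.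
lemma integral_self_mul_betaMeasure (ha : 0 < a) (hb : 0 < b) (f : ℝ → ℝ) :
    ∫ x, x * f x ∂betaMeasure a b = a / (a + b) * ∫ x, f x ∂betaMeasure (a + 1) b := by
  rw [integral_betaMeasure ha hb, integral_betaMeasure (by positivity) hb, ← integral_const_mul]
  simp only [← mul_assoc, betaPDFReal_mul_self ha hb]

lemma integral_id_betaMeasure (ha : 0 < a) (hb : 0 < b) :
    ∫ x, x ∂betaMeasure a b = a / (a + b) := by
  have := isProbabilityMeasureBeta (add_pos ha one_pos) hb
  simpa using integral_self_mul_betaMeasure ha hb fun _ => 1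

lemma integral_sq_betaMeasure (ha : 0 < a) (hb : 0 < b) :
    ∫ x, x ^ 2 ∂betaMeasure a b = a / (a + b) * ((a + 1) / (a + 1 + b)) := by
  simp only [sq, integral_self_mul_betaMeasure ha hb fun x => x,
    integral_id_betaMeasure (add_pos ha one_pos) hb]

lemma variance_id_betaMeasure (ha : 0 < a) (hb : 0 < b) :
    variance id (betaMeasure a b) = a * b / ((a + b) ^ 2 * (a + b + 1)) := by
  have := isProbabilityMeasureBeta ha hb
  rw [variance_eq_sub (memLp_id_betaMeasure ha hb)]
  simp only [Pi.pow_apply, id, integral_sq_betaMeasure ha hb, integral_id_betaMeasure ha hb]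
  field_simp
  ring

lemma variance_id_betaMeasure_le (ha : 0 < a) (hb : 0 < b) :
    variance id (betaMeasure a b) ≤ 1 / (4 * (a + b + 1)) := by
  have amgm : 4 * (a * b) ≤ (a + b) ^ 2 := by linarith [sq_nonneg (a - b), add_sq a b, sub_sq a b]
  rw [variance_id_betaMeasure ha hb, div_le_div_iff₀ (by positivity) (by positivity)]
  nlinarith

lemma betaMeasure_real_abs_sub_mean_ge_le (ha : 0 < a) (hb : 0 < b) {c : ℝ} (hc : 0 < c) :
    (betaMeasure a b).real {x | c ≤ |x - a / (a + b)|} ≤ 1 / (4 * (a + b + 1) * c ^ 2) := by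
  have := isProbabilityMeasureBeta ha hb
  have cheb := measureReal_ge_le_variance_div_sq (memLp_id_betaMeasure ha hb) hc
  simp only [id, integral_id_betaMeasure ha hb] at cheb
  rw [← div_div]
  exact cheb.trans (by gcongr; exact variance_id_betaMeasure_le ha hb)

lemma cdf_betaMeasure_le (ha : 0 < a) (hb : 0 < b) {c x : ℝ} (hc : 0 < c)
    (hx : x + c ≤ a / (a + b)) : cdf (betaMeasure a b) x ≤ 1 / (4 * (a + b + 1) * c ^ 2) := by
  have := isProbabilityMeasureBeta ha hb
  rw [cdf_eq_real]
  refine (measureReal_mono fun y (hy : y ≤ x) => ?_).trans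
    (betaMeasure_real_abs_sub_mean_ge_le ha hb hc)
  have : c ≤ -(y - a / (a + b)) := by linarith
  exact this.trans (neg_le_abs _)

lemma one_sub_cdf_betaMeasure_le (ha : 0 < a) (hb : 0 < b) {c x : ℝ} (hc : 0 < c)
    (hx : a / (a + b) + c ≤ x) : 1 - cdf (betaMeasure a b) x ≤ 1 / (4 * (a + b + 1) * c ^ 2) := by
  have := isProbabilityMeasureBeta ha hb
  rw [cdf_eq_real, ← probReal_compl_eq_one_sub measurableSet_Iic, compl_Iic]
  refine (measureReal_mono fun y (hy : x < y) => ?_).trans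
    (betaMeasure_real_abs_sub_mean_ge_le ha hb hc)
  have : c ≤ y - a / (a + b) := by linarith
  exact this.trans (le_abs_self _)

lemma betaPDF_eq_betaPDFReal {x : ℝ} (hx : x ∈ Ioo 0 1) : betaPDF a b x = betaPDFReal a b x := by
  rw [betaPDF, betaPDFReal, if_pos (mem_Ioo.1 hx), beta]
  ring

lemma regIncBeta_eq_cdf_betaMeasure (ha : 0 < a) (hb : 0 < b) {x : ℝ} (hx : x ≤ 1) :
    regIncBeta a b x = cdf (betaMeasure a b) x := by
  have := isProbabilityMeasureBeta ha hb
  calc regIncBeta a b x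
      = ∫ t in Ioo 0 x, betaPDF a b t := integral_Ioc_eq_integral_Ioo
    _ = ∫ t in Ioo 0 x, betaPDFReal a b t :=
        setIntegral_congr_fun measurableSet_Ioo fun t ht =>
          betaPDF_eq_betaPDFReal ⟨ht.1, ht.2.trans_le hx⟩
    _ = ∫ t in Ioc 0 x, betaPDFReal a b t := integral_Ioc_eq_integral_Ioo.symm
    _ = ∫ t in Iic x, betaPDFReal a b t := by
        refine setIntegral_eq_of_subset_of_forall_sdiff_eq_zero measurableSet_Iic
          Ioc_subset_Iic_self (fun t ht => ?_) |>.symm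
        exact if_neg fun h => ht.2 ⟨h.1, ht.1⟩
    _ = ∫ t, betaPDFReal a b t * (Iic x).indicator 1 t := by
        rw [← integral_indicator measurableSet_Iic]
        simp only [indicator_apply, Pi.one_apply, mul_ite, mul_one, mul_zero]
    _ = cdf (betaMeasure a b) x := by
        rw [← integral_betaMeasure ha hb, integral_indicator_one measurableSet_Iic, cdf_eq_real]

end Beta

section BerkJones

variable {n : ℕ} {u : Fin n → ℝ} {k : Fin n} {c : ℝ}

lemma Mn_le_pOrd (u : Fin n → ℝ) (k : Fin n) : Mn u ≤ pOrd u k :=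
  (min_le_left _ _).trans (ciInf_le (finite_range _).bddBelow k)

lemma Mn_le_one_sub_pOrd (u : Fin n → ℝ) (k : Fin n) : Mn u ≤ 1 - pOrd u k :=
  (min_le_right _ _).trans (ciInf_le (finite_range fun i => 1 - pOrd u i).bddBelow k)

lemma Mn_le_of_le_abs_orderStat_sub (hu : orderStat u k ≤ 1) (hc : 0 < c)
    (h : c ≤ |orderStat u k - (k + 1) / (n + 1)|) : Mn u ≤ 1 / (4 * (n + 2) * c ^ 2) := by
  have ha : (0 : ℝ) < k + 1 := by positivity
  have hb : (0 : ℝ) < n - k := sub_pos.2 (mod_cast k.isLt)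
  have hsum : (k + 1 : ℝ) + (n - k) = n + 1 := by ring
  have hpOrd := regIncBeta_eq_cdf_betaMeasure ha hb hu
  rw [show (n + 2 : ℝ) = (k + 1) + (n - k) + 1 by ring]
  rw [← hsum] at h
  rcases le_abs.1 h with habove | hbelow
  · refine (Mn_le_one_sub_pOrd u k).trans ?_
    rw [pOrd, hpOrd]
    exact one_sub_cdf_betaMeasure_le ha hb hc (by linarith)
  · refine (Mn_le_pOrd u k).trans ?_
    rw [pOrd, hpOrd]
    exact cdf_betaMeasure_le ha hb hc (by linarith)

end BerkJones

section HitCount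

open ProbabilityTheory (variance variance_sum_pi variance_le_sq_of_bounded)

variable {ι Ω : Type*} [Fintype ι] {s : Set Ω}

open Classical in
/-- The number of points of the sample `X` that lie in `s`, that is, the sample size times the
empirical measure of `s`. -/
noncomputable def hitCount (s : Set Ω) (X : ι → Ω) : ℕ :=
  (Finset.univ.filter fun i => X i ∈ s).card

lemma cast_hitCount (s : Set Ω) (X : ι → Ω) :
    (hitCount s X : ℝ) = ∑ i, s.indicator 1 (X i) := by
  classical
  simp only [hitCount, indicator_apply, Pi.one_apply, Finset.sum_boole]

lemma hitCount_le_card (s : Set Ω) (X : ι → Ω) : hitCount s X ≤ Fintype.card ι := by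
  classical exact Finset.card_filter_le _ _

variable [MeasurableSpace Ω]

lemma measurable_hitCount (hs : MeasurableSet s) :
    Measurable fun X : ι → Ω => (hitCount s X : ℝ) := by
  simp only [cast_hitCount]
  exact Finset.measurable_fun_sum _ fun i _ =>
    (measurable_one.indicator hs).comp (measurable_pi_apply i)

variable {μ : Measure Ω} [IsProbabilityMeasure μ]

lemma memLp_hitCount (hs : MeasurableSet s) :
    MemLp (fun X : ι → Ω => (hitCount s X : ℝ)) 2 (Measure.pi fun _ => μ) := by
  refine memLp_of_bounded (a := 0) (b := Fintype.card ι) (ae_of_all _ fun X => ⟨?_, ?_⟩)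
    (measurable_hitCount hs).aestronglyMeasurable 2
  · positivity
  · exact mod_cast hitCount_le_card s X

lemma integral_hitCount (hs : MeasurableSet s) :
    ∫ X : ι → Ω, (hitCount s X : ℝ) ∂Measure.pi (fun _ => μ) = Fintype.card ι * μ.real s := by
  have hind : Integrable (s.indicator (1 : Ω → ℝ)) μ := (integrable_const 1).indicator hs
  simp only [cast_hitCount]
  rw [integral_finsetSum _ fun i _ => integrable_comp_eval (i := i) hind]
  simp only [integral_comp_eval (μ := fun _ : ι => μ) hind.aestronglyMeasurable,
    integral_indicator_one hs, Finset.sum_const, Finset.card_univ, nsmul_eq_mul]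

lemma variance_hitCount_le (hs : MeasurableSet s) :
    variance (fun X : ι → Ω => (hitCount s X : ℝ)) (Measure.pi fun _ => μ)
      ≤ Fintype.card ι / 4 := by
  have hmeas : Measurable (s.indicator (1 : Ω → ℝ)) := measurable_one.indicator hs
  have hbdd : ∀ᵐ ω ∂μ, s.indicator (1 : Ω → ℝ) ω ∈ Icc 0 1 :=
    ae_of_all _ fun ω => ⟨indicator_nonneg (fun _ _ => zero_le_one) ω,
      indicator_le_self' (fun _ _ => zero_le_one) ω⟩
  have hvar := variance_sum_pi (μ := fun _ : ι => μ) (X := fun _ => s.indicator 1)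
    fun _ => memLp_of_bounded hbdd hmeas.aestronglyMeasurable 2
  have hsum : (fun X : ι → Ω => (hitCount s X : ℝ)) = ∑ i, fun X => s.indicator 1 (X i) := by
    ext X
    rw [cast_hitCount, Finset.sum_apply]
  rw [hsum, hvar, Finset.sum_const, Finset.card_univ, nsmul_eq_mul, div_eq_mul_one_div]
  gcongr
  exact (variance_le_sq_of_bounded hbdd hmeas.aemeasurable).trans (by norm_num)

lemma measureReal_abs_hitCount_sub_ge_le [Nonempty ι] (hs : MeasurableSet s) {δ : ℝ}
    (hδ : 0 < δ) :
    (Measure.pi fun _ : ι => μ).real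
        {X | Fintype.card ι * δ ≤ |hitCount s X - Fintype.card ι * μ.real s|}
      ≤ 1 / (4 * δ ^ 2) / Fintype.card ι := by
  have hcard : (0 : ℝ) < Fintype.card ι := mod_cast Fintype.card_pos
  have cheb := measureReal_ge_le_variance_div_sq (memLp_hitCount (ι := ι) (μ := μ) hs)
    (mul_pos hcard hδ)
  rw [integral_hitCount hs] at cheb
  refine cheb.trans ?_
  calc variance (fun X : ι → Ω => (hitCount s X : ℝ)) (Measure.pi fun _ => μ)
        / (Fintype.card ι * δ) ^ 2
      ≤ Fintype.card ι / 4 / (Fintype.card ι * δ) ^ 2 := by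
        gcongr
        exact variance_hitCount_le hs
    _ = 1 / (4 * δ ^ 2) / Fintype.card ι := by field_simp

lemma tendsto_measureReal_abs_hitCount_sub_lt (hs : MeasurableSet s) {δ : ℝ} (hδ : 0 < δ) :
    Tendsto (fun n : ℕ => (Measure.pi fun _ : Fin n => μ).real
      {X | |hitCount s X - n * μ.real s| < n * δ}) atTop (nhds 1) := by
  have hlow : Tendsto (fun n : ℕ => 1 - 1 / (4 * δ ^ 2) / (n : ℝ)) atTop (nhds 1) := by
    simpa only [sub_zero] using
      (tendsto_const_div_atTop_nhds_zero_nat (1 / (4 * δ ^ 2))).const_sub (1 : ℝ)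
  refine tendsto_of_tendsto_of_tendsto_of_le_of_le' hlow tendsto_const_nhds ?_
    (Eventually.of_forall fun _ => measureReal_le_one)
  filter_upwards [eventually_gt_atTop 0] with n hn
  have : Nonempty (Fin n) := ⟨⟨0, hn⟩⟩
  have hfar := measureReal_abs_hitCount_sub_ge_le (ι := Fin n) (μ := μ) hs hδ
  rw [Fintype.card_fin] at hfar
  have hmeas : MeasurableSet {X : Fin n → Ω | |hitCount s X - n * μ.real s| < n * δ} :=
    measurableSet_lt ((measurable_hitCount hs).sub_const _).abs measurable_const
  have hcompl := probReal_compl_eq_one_sub (μ := Measure.pi fun _ : Fin n => μ) hmeas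
  simp only [compl_ofPred, not_lt] at hcompl
  linarith

end HitCount

section OrderStat

variable {n : ℕ} {X : Fin n → ℝ} {F : ℝ → ℝ} {t c : ℝ}

lemma orderStat_le_iff (X : Fin n → ℝ) (k : Fin n) (t : ℝ) :
    orderStat X k ≤ t ↔ (k : ℕ) < hitCount (Iic t) X := by
  classical
  have hcard : hitCount (Iic t) X
      = (Finset.univ.filter fun i => (X ∘ Tuple.sort X) i ≤ t).card :=
    (Finset.card_equiv (Tuple.sort X) fun i => by simp).symm
  rw [hcard, Tuple.lt_card_le_iff_apply_le_of_monotone (Tuple.monotone_sort X)]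
  rfl

lemma orderStat_comp (hF : Monotone F) (X : Fin n → ℝ) (k : Fin n) :
    orderStat (fun i => F (X i)) k = F (orderStat X k) :=
  have hsorted : Monotone ((F ∘ X) ∘ Tuple.sort X) := hF.comp (Tuple.monotone_sort X)
  (congrFun (Tuple.comp_sort_eq_comp_iff_monotone.2 hsorted) k).symm

lemma exists_orderStat_comp_add_le (hF : Monotone F) (hpos : 0 < F t + c)
    (h : F t + c ≤ hitCount (Iic t) X / (n + 1)) :
    ∃ k : Fin n, orderStat (fun i => F (X i)) k + c ≤ (k + 1) / (n + 1) := by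
  have hle : hitCount (Iic t) X ≤ n := (hitCount_le_card _ X).trans_eq (Fintype.card_fin n)
  obtain ⟨m, hm⟩ : ∃ m, hitCount (Iic t) X = m + 1 := by
    refine Nat.exists_eq_succ_of_ne_zero fun h0 => ?_
    rw [h0, Nat.cast_zero, zero_div] at h
    linarith
  refine ⟨⟨m, by omega⟩, ?_⟩
  have hord : F (orderStat X ⟨m, by omega⟩) ≤ F t := hF ((orderStat_le_iff X _ t).2 (by simp [hm]))
  rw [hm, Nat.cast_succ] at h
  rw [orderStat_comp hF]
  linarith

lemma exists_add_le_orderStat_comp (hF : Monotone F) (hlt : F t < 1 + c)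
    (h : (hitCount (Iic t) X + 1) / (n + 1) + c ≤ F t) :
    ∃ k : Fin n, (k + 1) / (n + 1) + c ≤ orderStat (fun i => F (X i)) k := by
  have hcount : hitCount (Iic t) X < n := by
    have : (hitCount (Iic t) X + 1 : ℝ) / (n + 1) < 1 := by linarith
    rw [div_lt_one (by positivity), add_lt_add_iff_right] at this
    exact mod_cast this
  refine ⟨⟨_, hcount⟩, h.trans ?_⟩
  rw [orderStat_comp hF]
  exact hF (not_le.1 fun hle => lt_irrefl _ ((orderStat_le_iff X _ t).1 hle)).le

-- The slack `2 * δ` pays `δ` for the sampling error and `δ ≥ 1 / (n + 1)` for passing from the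
-- empirical frequency `N / n` to the null means `N / (n + 1)` and `(N + 1) / (n + 1)`.
lemma exists_le_abs_orderStat_comp_sub (hF : Monotone F) (hFt : F t ∈ Icc 0 1) {g δ : ℝ}
    (hg : g ∈ Icc 0 1) (hc : 0 < c) (hgap : c + 2 * δ ≤ |g - F t|) (hn : 1 ≤ (n + 1) * δ)
    (hX : |hitCount (Iic t) X - n * g| < n * δ) :
    ∃ k : Fin n, c ≤ |orderStat (fun i => F (X i)) k - (k + 1) / (n + 1)| := by
  have hn0 : (0 : ℝ) < n + 1 := by positivity
  obtain ⟨hlow, hupp⟩ := abs_lt.1 hX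
  rcases le_abs.1 hgap with hFg | hgF
  · have hpos : 0 < F t + c := add_pos_of_nonneg_of_pos hFt.1 hc
    obtain ⟨k, hk⟩ := exists_orderStat_comp_add_le (X := X) hF hpos <|
      calc F t + c ≤ g - 2 * δ := by linarith
        _ ≤ hitCount (Iic t) X / (n + 1) := by
          rw [le_div_iff₀ hn0]
          nlinarith [hg.2]
    exact ⟨k, le_abs.2 (Or.inr (by linarith))⟩
  · obtain ⟨k, hk⟩ := exists_add_le_orderStat_comp (X := X) (c := c) hF (by linarith [hFt.2]) <|
      calc (hitCount (Iic t) X + 1) / (n + 1) + c ≤ (g + 2 * δ) + c := by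
            gcongr
            rw [div_le_iff₀ hn0]
            nlinarith [hg.1]
        _ ≤ F t := by linarith
    exact ⟨k, le_abs.2 (Or.inl (by linarith))⟩

end OrderStat

section FixedAlternative

open ProbabilityTheory (cdf cdf_nonneg cdf_le_one cdf_eq_real)

lemma exists_pos_lt_sq_mul_eq {D ε : ℝ} (hD : 0 < D) (hε : 0 < ε) :
    ∃ c, 0 < c ∧ c < D ∧ (1 + ε) * c ^ 2 = D ^ 2 := by
  have hsqrt : 1 < √(1 + ε) := Real.lt_sqrt_of_sq_lt (by linarith)
  refine ⟨D / √(1 + ε), by positivity, div_lt_self hD hsqrt, ?_⟩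
  rw [div_pow, Real.sq_sqrt (by positivity)]
  field_simp

lemma ciSup_abs_sub_pos {α : Type*} {f g : α → ℝ} (hf : ∀ t, f t ∈ Icc 0 1)
    (hg : ∀ t, g t ∈ Icc 0 1) (hne : g ≠ f) : 0 < ⨆ t, |g t - f t| := by
  obtain ⟨t, ht⟩ := Function.ne_iff.1 hne
  have hbdd : BddAbove (range fun t => |g t - f t|) := by
    refine ⟨1, forall_mem_range.2 fun t => ?_⟩
    exact abs_le.2 ⟨by linarith [(hf t).2, (hg t).1], by linarith [(hf t).1, (hg t).2]⟩
  exact (abs_pos.2 (sub_ne_zero.2 ht)).trans_le (le_ciSup hbdd t)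

theorem berk_jones_Mn_fixed_alternative_general {F : ℝ → ℝ} (hF : Monotone F)
    (hF01 : ∀ t, F t ∈ Icc 0 1) (μ : Measure ℝ) [IsProbabilityMeasure μ] (hne : ⇑(cdf μ) ≠ F)
    {ε : ℝ} (hε : 0 < ε) :
    Tendsto (fun n : ℕ => (Measure.pi fun _ : Fin n => μ).real
      {X | Mn (fun i => F (X i)) < (1 + ε) / (4 * (⨆ t, |cdf μ t - F t|) ^ 2 * n)})
      atTop (nhds 1) := by
  have hcdf : ∀ t, cdf μ t ∈ Icc (0 : ℝ) 1 := fun t => ⟨cdf_nonneg μ t, cdf_le_one μ t⟩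
  obtain ⟨c, hc, hcD, hcε⟩ := exists_pos_lt_sq_mul_eq (ciSup_abs_sub_pos hF01 hcdf hne) hε
  obtain ⟨t, ht⟩ := exists_lt_of_lt_ciSup hcD
  obtain ⟨δ, hδ, hgap⟩ : ∃ δ, 0 < δ ∧ c + 2 * δ ≤ |cdf μ t - F t| :=
    ⟨(|cdf μ t - F t| - c) / 2, by linarith, by linarith⟩
  refine tendsto_of_tendsto_of_tendsto_of_le_of_le'
    (tendsto_measureReal_abs_hitCount_sub_lt (μ := μ) (measurableSet_Iic (a := t)) hδ)
    tendsto_const_nhds ?_ (Eventually.of_forall fun _ => measureReal_le_one)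
  filter_upwards [eventually_gt_atTop 0, eventually_ge_atTop ⌈1 / δ⌉₊] with n hn0 hnδ
  have hnδ' : 1 ≤ (n + 1) * δ := (div_le_iff₀ hδ).1 (by linarith [Nat.ceil_le.1 hnδ])
  refine measureReal_mono fun X (hX : |hitCount (Iic t) X - n * μ.real (Iic t)| < n * δ) => ?_
  rw [← cdf_eq_real] at hX
  obtain ⟨k, hk⟩ :=
    exists_le_abs_orderStat_comp_sub hF (hF01 t) (hcdf t) hc hgap hnδ' hX
  calc Mn (fun i => F (X i))
      ≤ 1 / (4 * (n + 2) * c ^ 2) := Mn_le_of_le_abs_orderStat_sub (hF01 _).2 hc hk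
    _ < 1 / (4 * n * c ^ 2) := by gcongr; linarith
    _ = (1 + ε) / (4 * (⨆ t, |cdf μ t - F t|) ^ 2 * n) := by rw [← hcε]; field_simp

end FixedAlternative

theorem berk_jones_Mn_fixed_alternative (F G : ℝ → ℝ)
    (hF : IsContinuousCDF F) (hG : IsContinuousCDF G) (hne : G ≠ F)
    (μG : Measure ℝ) [IsProbabilityMeasure μG]
    (hμG : ∀ t : ℝ, (μG (Set.Iic t)).toReal = G t)
    (ε : ℝ) (hε : 0 < ε) :
    Filter.Tendsto (fun n : ℕ =>
        ((Measure.pi fun _ : Fin n => μG)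
          {X | Mn (fun i => F (X i)) <
            (1 + ε) / (4 * (⨆ t : ℝ, |G t - F t|) ^ 2 * n)}).toReal)
      Filter.atTop (nhds 1) := by
  obtain rfl : ⇑(ProbabilityTheory.cdf μG) = G :=
    funext fun t => (ProbabilityTheory.cdf_eq_real μG t).trans (hμG t)
  exact berk_jones_Mn_fixed_alternative_general hF.2.1
    (fun t => ⟨hF.2.1.le_of_tendsto hF.2.2.1 t, hF.2.1.ge_of_tendsto hF.2.2.2 t⟩) μG hne hε
end

section
/- Let ε > 0 and a > 0, and let f: ℝ → ℝ be a non-negative function satisfying ∫_ℝ f(x) dx = 1 and f(x) ≥ (1/√(2π)) e^{-x²/2} (1 - ε) for all x ∈ [-a, a]. Then for any t ∈ [0, a], ∫_{-∞}^{-t} f(x) dx ≤ (1/√(2π)) (1/t) e^{-t²/2} + (1/√(2π)) (1/a) e^{-a²/2} + ε. -/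
open MeasureTheory Filter Set

/-!
Put `S = (s, u)` and let `φ` be the Gaussian density with mean `m ∈ S`. Since `f ≥ (1 - ε) φ` on
`S`, the total mass of `f` leaves at most `∫_{Sᶜ} φ + ε` for the complement of `S`, both tails
together. The two tails of `φ` are bounded by Mills' inequality: on `(u, ∞)` the factor `u - m`
is at most `x - m`, and `(x - m) φ` is a multiple of `φ'`.
-/

section GaussianTail

open ProbabilityTheory
open scoped NNReal

lemma setIntegral_compl_le_of_one_sub_mul_le {α : Type*} [MeasurableSpace α] {μ : Measure α}
    {f g : α → ℝ} {S : Set α} {ε : ℝ} (hS : MeasurableSet S) (hf : Integrable f μ)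
    (hg : Integrable g μ) (hle : ∫ x, f x ∂μ ≤ ∫ x, g x ∂μ)
    (hlb : ∀ x ∈ S, (1 - ε) * g x ≤ f x) :
    ∫ x in Sᶜ, f x ∂μ ≤ ∫ x in Sᶜ, g x ∂μ + ε * ∫ x in S, g x ∂μ := by
  have hlbS : (1 - ε) * ∫ x in S, g x ∂μ ≤ ∫ x in S, f x ∂μ := by
    rw [← integral_const_mul]
    exact setIntegral_mono_on (hg.const_mul _).integrableOn hf.integrableOn hS hlb
  calc ∫ x in Sᶜ, f x ∂μ
      = ∫ x, f x ∂μ - ∫ x in S, f x ∂μ := setIntegral_compl hS hf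
    _ ≤ ∫ x, g x ∂μ - (1 - ε) * ∫ x in S, g x ∂μ := sub_le_sub hle hlbS
    _ = ∫ x in Sᶜ, g x ∂μ + ε * ∫ x in S, g x ∂μ := by
        rw [setIntegral_compl hS hg]
        ring

lemma setIntegral_compl_Ioo {α E : Type*} [LinearOrder α] [TopologicalSpace α]
    [OrderClosedTopology α] [MeasurableSpace α] [OpensMeasurableSpace α] [NormedAddCommGroup E]
    [NormedSpace ℝ E] {μ : Measure α} [NullSingletonClass μ] {g : α → E} {s u : α} (hsu : s ≤ u)
    (hg : IntegrableOn g (Ioo s u)ᶜ μ) :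
    ∫ x in (Ioo s u)ᶜ, g x ∂μ = ∫ x in Iic s, g x ∂μ + ∫ x in Ioi u, g x ∂μ := by
  have hcompl : ((Ioo s u)ᶜ : Set α) =ᵐ[μ] ((Ioc s u)ᶜ : Set α) := Ioo_ae_eq_Ioc.compl
  have hunion : (Ioc s u)ᶜ = Iic s ∪ Ioi u := by
    rw [← Ioi_inter_Iic, compl_inter, compl_Ioi, compl_Iic]
  have hgu : IntegrableOn g (Iic s ∪ Ioi u) μ := hunion ▸ hg.congr_set_ae hcompl.symm
  rw [setIntegral_congr_set hcompl, hunion, setIntegral_union (Iic_disjoint_Ioi hsu)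
    measurableSet_Ioi hgu.left_of_union hgu.right_of_union]

lemma gaussianPDFReal_zero_one (x : ℝ) :
    gaussianPDFReal 0 1 x = 1 / Real.sqrt (2 * Real.pi) * Real.exp (-x ^ 2 / 2) := by
  simp [gaussianPDFReal]

lemma gaussianPDFReal_apply_neg (m : ℝ) (v : ℝ≥0) (x : ℝ) :
    gaussianPDFReal m v (-x) = gaussianPDFReal (-m) v x := by
  rw [gaussianPDFReal, gaussianPDFReal]
  congr 3
  ring

lemma hasDerivAt_gaussianPDFReal (m : ℝ) (v : ℝ≥0) (x : ℝ) :
    HasDerivAt (gaussianPDFReal m v) (-((x - m) / v * gaussianPDFReal m v x)) x := by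
  have hexponent : HasDerivAt (fun y : ℝ ↦ -(y - m) ^ 2 / (2 * v)) (-((x - m) / v)) x := by
    refine ((((hasDerivAt_id x).sub_const m).pow 2).neg.div_const (2 * (v : ℝ))).congr_deriv ?_
    simp only [id]
    field
  refine (hexponent.exp.const_mul (Real.sqrt (2 * Real.pi * v))⁻¹).congr_deriv ?_
  rw [gaussianPDFReal]
  ring

lemma integrable_sub_mul_gaussianPDFReal (m : ℝ) (v : ℝ≥0) :
    Integrable (fun x ↦ (x - m) * gaussianPDFReal m v x) := by
  obtain rfl | hv := eq_or_ne v 0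
  · simp
  have hcentered : Integrable (fun x ↦ x * gaussianPDFReal 0 v x) := by
    have hexp := (integrable_mul_exp_neg_mul_sq (b := (2 * (v : ℝ))⁻¹) (by positivity)).const_mul
      (Real.sqrt (2 * Real.pi * v))⁻¹
    refine hexp.congr (ae_of_all _ fun x ↦ ?_)
    simp only [gaussianPDFReal, sub_zero, neg_mul, neg_div, inv_mul_eq_div]
    ring
  simpa only [gaussianPDFReal_sub, zero_add] using hcentered.comp_sub_right m

lemma setIntegral_Ioi_sub_mul_gaussianPDFReal (m u : ℝ) (v : ℝ≥0) :
    ∫ x in Ioi u, (x - m) * gaussianPDFReal m v x = v * gaussianPDFReal m v u := by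
  obtain rfl | hv := eq_or_ne v 0
  · simp
  have hderiv : ∀ x ∈ Ici u,
      HasDerivAt (fun y ↦ -(v * gaussianPDFReal m v y)) ((x - m) * gaussianPDFReal m v x) x :=
    fun x _ ↦ ((hasDerivAt_gaussianPDFReal m v x).const_mul (v : ℝ)).neg.congr_deriv (by field)
  have hint := (integrable_sub_mul_gaussianPDFReal m v).integrableOn (s := Ioi u)
  have hlim := tendsto_zero_of_hasDerivAt_of_integrableOn_Ioi (fun x hx ↦ hderiv x hx.out.le) hint
    ((integrable_gaussianPDFReal m v).const_mul (v : ℝ)).neg.integrableOn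
  rw [integral_Ioi_of_hasDerivAt_of_tendsto' hderiv hint hlim, zero_sub, neg_neg]

lemma setIntegral_Ioi_gaussianPDFReal_le {m u : ℝ} (v : ℝ≥0) (hu : m < u) :
    ∫ x in Ioi u, gaussianPDFReal m v x ≤ v / (u - m) * gaussianPDFReal m v u := by
  rw [div_mul_eq_mul_div, le_div_iff₀' (sub_pos.2 hu), ← integral_const_mul,
    ← setIntegral_Ioi_sub_mul_gaussianPDFReal]
  exact setIntegral_mono_on ((integrable_gaussianPDFReal m v).const_mul _).integrableOn
    (integrable_sub_mul_gaussianPDFReal m v).integrableOn measurableSet_Ioi fun x hx ↦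
      mul_le_mul_of_nonneg_right (sub_le_sub_right hx.out.le m) (gaussianPDFReal_nonneg m v x)

lemma setIntegral_Iic_gaussianPDFReal_le {m s : ℝ} (v : ℝ≥0) (hs : s < m) :
    ∫ x in Iic s, gaussianPDFReal m v x ≤ v / (m - s) * gaussianPDFReal m v s := by
  have hreflect : ∫ x in Iic s, gaussianPDFReal m v x
      = ∫ x in Ioi (-s), gaussianPDFReal (-m) v x := by
    simp only [← integral_comp_neg_Iic, gaussianPDFReal_apply_neg, neg_neg]
  rw [hreflect]
  simpa only [neg_sub_neg, gaussianPDFReal_apply_neg, neg_neg] using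
    setIntegral_Ioi_gaussianPDFReal_le v (neg_lt_neg hs)

theorem nearly_gaussian_density_tail_general {m s u ε : ℝ} {v : ℝ≥0} (hv : v ≠ 0) (hs : s < m)
    (hu : m < u) (hε : 0 ≤ ε) {f : ℝ → ℝ} (hf : Integrable f) (hf1 : ∫ x, f x ≤ 1)
    (hlb : ∀ x ∈ Ioo s u, (1 - ε) * gaussianPDFReal m v x ≤ f x) :
    ∫ x in (Ioo s u)ᶜ, f x ≤
      v / (m - s) * gaussianPDFReal m v s + v / (u - m) * gaussianPDFReal m v u + ε := by
  have hφ := integrable_gaussianPDFReal m v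
  have hφ1 := integral_gaussianPDFReal_eq_one m hv
  have hφS : ∫ x in Ioo s u, gaussianPDFReal m v x ≤ 1 :=
    (setIntegral_le_integral hφ (ae_of_all _ (gaussianPDFReal_nonneg m v))).trans_eq hφ1
  calc ∫ x in (Ioo s u)ᶜ, f x
      ≤ (∫ x in (Ioo s u)ᶜ, gaussianPDFReal m v x) + ε * ∫ x in Ioo s u, gaussianPDFReal m v x :=
        setIntegral_compl_le_of_one_sub_mul_le measurableSet_Ioo hf hφ (hf1.trans_eq hφ1.symm) hlb
    _ ≤ v / (m - s) * gaussianPDFReal m v s + v / (u - m) * gaussianPDFReal m v u + ε := by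
        rw [setIntegral_compl_Ioo (hs.trans hu).le hφ.integrableOn]
        exact add_le_add (add_le_add (setIntegral_Iic_gaussianPDFReal_le v hs)
          (setIntegral_Ioi_gaussianPDFReal_le v hu)) (mul_le_of_le_one_right hε hφS)

end GaussianTail

theorem nearly_gaussian_density_tail (ε a : ℝ) (hε : 0 < ε) (ha : 0 < a)
    (f : ℝ → ℝ) (hf0 : ∀ x, 0 ≤ f x)
    (hfi : MeasureTheory.Integrable f)
    (hf1 : ∫ x : ℝ, f x = 1)
    (hflb : ∀ x ∈ Set.Icc (-a) a,
      (1 / Real.sqrt (2 * Real.pi)) * Real.exp (-x^2 / 2) * (1 - ε) ≤ f x)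
    (t : ℝ) (ht : t ∈ Set.Ioc (0:ℝ) a) :
    ∫ x in Set.Iic (-t), f x ≤
      (1 / Real.sqrt (2 * Real.pi)) * (1 / t) * Real.exp (-t^2 / 2) +
        (1 / Real.sqrt (2 * Real.pi)) * (1 / a) * Real.exp (-a^2 / 2) + ε := by
  have hlb : ∀ x ∈ Ioo (-t) a, (1 - ε) * ProbabilityTheory.gaussianPDFReal 0 1 x ≤ f x :=
    fun x hx ↦ by
      rw [gaussianPDFReal_zero_one, mul_comm]
      exact hflb x ⟨(neg_le_neg ht.2).trans hx.1.le, hx.2.le⟩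
  calc ∫ x in Iic (-t), f x
      ≤ ∫ x in (Ioo (-t) a)ᶜ, f x :=
        setIntegral_mono_set hfi.integrableOn (ae_of_all _ hf0)
          (Eventually.of_forall fun _ hx hx' ↦ hx'.1.not_ge hx)
    _ ≤ _ := nearly_gaussian_density_tail_general one_ne_zero (neg_lt_zero.2 ht.1) ha hε.le hfi
        hf1.le hlb
    _ = _ := by
        simp only [gaussianPDFReal_zero_one, NNReal.coe_one, zero_sub, sub_zero, neg_neg, neg_sq]
        ring
end

section
/- Under the null hypothesis, for any fixed x > 0, P( M_n^+ ≥ x / (2 log n · log log n) ) ≥ e^{-x} + o(1) as n → ∞. -/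
open MeasureTheory Filter Set

/-!
The event `M_n^+ ≥ δ` says that no order statistic `U_(i)` falls below the `δ`-quantile `c_i` of
its Beta law. Split the indices into `K` blocks on which the relative standard deviation of that
law varies at most by the factor `n ^ (1/K)`. The likelihood ratio of a sample uniform on
`[0, 1/(1+θ)]` to one uniform on `[0, 1]` is at least some `ℓ_i(θ)` on the event `T_i` that the
first crossing of the block happens at `i`, so `∑ ℓ_i(θ) P(T_i) ≤ 1` for every `θ`. Integrate this
against the scale-invariant prior `dθ / θ` over the scales of the block: each `∫ ℓ_i(θ) dθ / θ` is
about `1 / (2 L δ)` with `L = log log n`, while the prior has mass about `log n / K`. So the block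
is crossed with probability at most about `2 L δ log n / K = x / K` when
`δ = x / (2 log n log log n)`. Not crossing a given block is an increasing event in the sample, so
by Harris' inequality no block is crossed with probability at least about
`(1 - x / K) ^ K → exp (-x)`. The `O(L²)` indices too close to the edges for the Gaussian
approximation cost `δ` each.
-/

section BetaCDF

/-- The upper tail `P(Bin(n, c) ≥ k)` of a binomial law, as a sum of Bernstein polynomials. -/
noncomputable def binomialTail (n k : ℕ) (c : ℝ) : ℝ :=
  ∑ j ∈ Finset.Ico k (n + 1), (bernsteinPolynomial ℝ n j).eval c

lemma eval_bernsteinPolynomial (n j : ℕ) (c : ℝ) :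
    (bernsteinPolynomial ℝ n j).eval c = n.choose j * c ^ j * (1 - c) ^ (n - j) := by
  simp [bernsteinPolynomial]

lemma continuous_binomialTail (n k : ℕ) : Continuous (binomialTail n k) := by
  unfold binomialTail; fun_prop

lemma binomialTail_succ_zero (n k : ℕ) : binomialTail n (k + 1) 0 = 0 := by
  unfold binomialTail
  refine Finset.sum_eq_zero fun j hj => ?_
  rw [bernsteinPolynomial.eval_at_0, if_neg (by grind)]

lemma binomialTail_one {n k : ℕ} (hk : k ≤ n) : binomialTail n k 1 = 1 := by
  unfold binomialTail
  simp [bernsteinPolynomial.eval_at_1, Finset.sum_ite_eq', hk]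

lemma binomialTail_anti (n : ℕ) {k l : ℕ} (hkl : k ≤ l) {c : ℝ} (hc : c ∈ Icc (0 : ℝ) 1) :
    binomialTail n l c ≤ binomialTail n k c := by
  refine Finset.sum_le_sum_of_subset_of_nonneg (Finset.Ico_subset_Ico_left hkl) fun j _ _ => ?_
  have := sub_nonneg.2 hc.2
  have := hc.1
  rw [eval_bernsteinPolynomial]
  positivity

/-- The unnormalised density `s ^ a * (1 - s) ^ b` of the Beta law with integer parameters
`a + 1` and `b + 1`, i.e. of the order statistic of 0-based rank `a` in a sample of size
`a + b + 1`. -/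
noncomputable def betaKernel (a b : ℕ) (s : ℝ) : ℝ := s ^ a * (1 - s) ^ b

lemma continuous_betaKernel (a b : ℕ) : Continuous (betaKernel a b) := by
  unfold betaKernel; fun_prop

lemma intervalIntegrable_betaKernel (a b : ℕ) (x y : ℝ) :
    IntervalIntegrable (betaKernel a b) volume x y :=
  (continuous_betaKernel a b).intervalIntegrable x y

lemma betaKernel_nonneg (a b : ℕ) {s : ℝ} (h₀ : 0 ≤ s) (h₁ : s ≤ 1) : 0 ≤ betaKernel a b s :=
  mul_nonneg (pow_nonneg h₀ a) (pow_nonneg (sub_nonneg.2 h₁) b)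

lemma betaKernel_pos (a b : ℕ) {s : ℝ} (h₀ : 0 < s) (h₁ : s < 1) : 0 < betaKernel a b s :=
  mul_pos (pow_pos h₀ a) (pow_pos (sub_pos.2 h₁) b)

lemma betaPDF_nat (a b : ℕ) (s : ℝ) :
    betaPDF (a + 1) (b + 1) s = ((a + b + 1).factorial / (a.factorial * b.factorial) : ℝ) *
      betaKernel a b s := by
  have hsum : (a : ℝ) + 1 + (b + 1) = (a + b + 1 : ℕ) + 1 := by push_cast; ring
  rw [betaPDF, betaKernel, hsum, add_sub_cancel_right, add_sub_cancel_right, Real.rpow_natCast,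
    Real.rpow_natCast, Real.Gamma_nat_eq_factorial, Real.Gamma_nat_eq_factorial,
    Real.Gamma_nat_eq_factorial]
  field_simp

lemma regIncBeta_nat_eq_mul_integral (a b : ℕ) {c : ℝ} (hc : 0 ≤ c) :
    regIncBeta (a + 1) (b + 1) c = ((a + b + 1).factorial / (a.factorial * b.factorial) : ℝ) *
      ∫ s in (0 : ℝ)..c, betaKernel a b s := by
  simp_rw [regIncBeta, betaPDF_nat, intervalIntegral.integral_of_le hc, integral_const_mul]

lemma derivative_sum_bernsteinPolynomial (n k : ℕ) (hk : k ≤ n) :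
    Polynomial.derivative (∑ j ∈ Finset.Ico (k + 1) (n + 2), bernsteinPolynomial ℝ (n + 1) j) =
      (n + 1) * bernsteinPolynomial ℝ n k := by
  have telescope := Finset.sum_Ico_sub (fun j => -bernsteinPolynomial ℝ n j) (show k ≤ n + 1 by lia)
  simp only [neg_sub_neg, bernsteinPolynomial.eq_zero_of_lt ℝ n.lt_succ_self, neg_zero,
    zero_sub, neg_neg] at telescope
  rw [Polynomial.derivative_sum, ← Finset.sum_Ico_add' _ k (n + 1) 1]
  simp only [bernsteinPolynomial.derivative_succ, ← Finset.mul_sum, Nat.add_sub_cancel, telescope,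
    Nat.cast_add, Nat.cast_one]

lemma hasDerivAt_binomialTail (a b : ℕ) (c : ℝ) :
    HasDerivAt (binomialTail (a + b + 1) (a + 1)) (betaPDF (a + 1) (b + 1) c) c := by
  have h := (∑ j ∈ Finset.Ico (a + 1) (a + b + 2),
    bernsteinPolynomial ℝ (a + b + 1) j).hasDerivAt c
  rw [derivative_sum_bernsteinPolynomial (a + b) a (by lia)] at h
  convert! h using 1
  · ext x; simp only [binomialTail, Polynomial.eval_finsetSum]
  · rw [betaPDF_nat, betaKernel, Polynomial.eval_mul, eval_bernsteinPolynomial,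
      Nat.cast_add_choose ℝ, Nat.factorial_succ, Nat.add_sub_cancel_left]
    simp only [Polynomial.eval_add, Polynomial.eval_natCast, Polynomial.eval_one]
    push_cast
    field_simp

lemma regIncBeta_eq_binomialTail (a b : ℕ) {c : ℝ} (hc : 0 ≤ c) :
    regIncBeta (a + 1) (b + 1) c = binomialTail (a + b + 1) (a + 1) c := by
  have hint : IntervalIntegrable (betaPDF (a + 1) (b + 1)) volume 0 c := by
    rw [funext (betaPDF_nat a b)]
    exact (intervalIntegrable_betaKernel a b 0 c).const_mul _
  rw [regIncBeta, ← intervalIntegral.integral_of_le hc,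
    intervalIntegral.integral_eq_sub_of_hasDerivAt (fun x _ => hasDerivAt_binomialTail a b x) hint,
    binomialTail_succ_zero, sub_zero]

lemma integral_betaKernel (a b : ℕ) :
    ∫ s in (0 : ℝ)..1, betaKernel a b s =
      a.factorial * b.factorial / (a + b + 1).factorial := by
  have h := regIncBeta_nat_eq_mul_integral a b zero_le_one
  rw [regIncBeta_eq_binomialTail a b zero_le_one, binomialTail_one (by lia)] at h
  field_simp at h ⊢
  linarith

lemma integral_betaKernel_pos (a b : ℕ) : 0 < ∫ s in (0 : ℝ)..1, betaKernel a b s := by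
  rw [integral_betaKernel]; positivity

lemma binomialTail_eq_div (a b : ℕ) {c : ℝ} (hc : 0 ≤ c) :
    binomialTail (a + b + 1) (a + 1) c =
      (∫ s in (0 : ℝ)..c, betaKernel a b s) / ∫ s in (0 : ℝ)..1, betaKernel a b s := by
  rw [← regIncBeta_eq_binomialTail a b hc, regIncBeta_nat_eq_mul_integral a b hc,
    integral_betaKernel]
  field_simp

lemma strictMonoOn_binomialTail (a b : ℕ) :
    StrictMonoOn (binomialTail (a + b + 1) (a + 1)) (Icc 0 1) := by
  refine strictMonoOn_of_deriv_pos (convex_Icc 0 1)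
    (continuous_binomialTail _ _).continuousOn fun c hc => ?_
  rw [interior_Icc] at hc
  rw [(hasDerivAt_binomialTail a b c).deriv, betaPDF_nat]
  exact mul_pos (by positivity) (betaKernel_pos a b hc.1 hc.2)

lemma exists_binomialTail_eq {n k : ℕ} (hk : k + 1 ≤ n) {δ : ℝ} (hδ : δ ∈ Ioo (0 : ℝ) 1) :
    ∃ c ∈ Ioo (0 : ℝ) 1, binomialTail n (k + 1) c = δ := by
  have h := intermediate_value_Ioo (zero_le_one' ℝ) (continuous_binomialTail n (k + 1)).continuousOn
  rw [binomialTail_succ_zero, binomialTail_one hk] at h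
  exact h hδ

end BetaCDF

section BetaMoments

/-- The point `(a + 1) / (a + b + 1)` around which the `Beta(a + 1, b + 1)` law concentrates: the
ratio of the 1-based rank to the sample size. -/
noncomputable def betaCenter (a b : ℕ) : ℝ := (a + 1) / (a + b + 1)

/-- The variance proxy `m * (1 - m) / n` of the `Beta(a + 1, b + 1)` law, where `m` is its
center and `n = a + b + 1`. -/
noncomputable def betaVar (a b : ℕ) : ℝ := betaCenter a b * (1 - betaCenter a b) / (a + b + 1)

lemma betaCenter_pos (a b : ℕ) : 0 < betaCenter a b := by unfold betaCenter; positivity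

lemma one_sub_betaCenter (a b : ℕ) : 1 - betaCenter a b = b / (a + b + 1) := by
  unfold betaCenter; field_simp; ring

lemma betaCenter_lt_one (a : ℕ) {b : ℕ} (hb : 0 < b) : betaCenter a b < 1 := by
  rw [← sub_pos, one_sub_betaCenter]; positivity

lemma betaVar_pos (a : ℕ) {b : ℕ} (hb : 0 < b) : 0 < betaVar a b :=
  div_pos (mul_pos (betaCenter_pos a b) (sub_pos.2 (betaCenter_lt_one a hb))) (by positivity)

lemma integral_betaKernel_succ (a b : ℕ) :
    ∫ s in (0 : ℝ)..1, betaKernel (a + 1) b s =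
      (a + 1) / (a + b + 2) * ∫ s in (0 : ℝ)..1, betaKernel a b s := by
  rw [integral_betaKernel, integral_betaKernel, show a + 1 + b + 1 = a + b + 1 + 1 by ring,
    Nat.factorial_succ a, Nat.factorial_succ (a + b + 1)]
  push_cast
  field_simp
  ring

lemma integral_sq_sub_betaCenter_le (a : ℕ) {b : ℕ} (hb : 0 < b) :
    ∫ s in (0 : ℝ)..1, (s - betaCenter a b) ^ 2 * betaKernel a b s ≤
      3 * betaVar a b * ∫ s in (0 : ℝ)..1, betaKernel a b s := by
  have expand : ∀ s, (s - betaCenter a b) ^ 2 * betaKernel a b s = betaKernel (a + 2) b s -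
      2 * betaCenter a b * betaKernel (a + 1) b s + betaCenter a b ^ 2 * betaKernel a b s := by
    intro s; unfold betaKernel; ring
  have int := fun a => intervalIntegrable_betaKernel a b 0 1
  simp only [expand]
  rw [intervalIntegral.integral_add ((int _).sub ((int _).const_mul _)) ((int _).const_mul _),
    intervalIntegral.integral_sub (int _) ((int _).const_mul _),
    intervalIntegral.integral_const_mul, intervalIntegral.integral_const_mul,
    integral_betaKernel_succ (a + 1), integral_betaKernel_succ a]
  have hI := integral_betaKernel_pos a b
  suffices h : ((a + 1 : ℕ) + 1 : ℝ) / ((a + 1 : ℕ) + b + 2) * ((a + 1) / (a + b + 2)) -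
      2 * betaCenter a b * ((a + 1) / (a + b + 2)) + betaCenter a b ^ 2 ≤ 3 * betaVar a b by
    nlinarith
  obtain ⟨b, rfl⟩ := Nat.exists_eq_succ_of_ne_zero hb.ne'
  rw [betaVar, one_sub_betaCenter, betaCenter, ← sub_nonneg]
  push_cast
  field_simp
  ring_nf
  positivity

lemma one_sub_div_sq_mul_integral_le {f : ℝ → ℝ} {m v w : ℝ} (hf : Continuous f)
    (hf₀ : ∀ s ∈ Icc (0 : ℝ) 1, 0 ≤ f s)
    (hv : ∫ s in (0 : ℝ)..1, (s - m) ^ 2 * f s ≤ v * ∫ s in (0 : ℝ)..1, f s)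
    (hw : 0 < w) (h₀ : 0 ≤ m - w) (h₁ : m + w ≤ 1) :
    (1 - v / w ^ 2) * ∫ s in (0 : ℝ)..1, f s ≤ ∫ s in (m - w)..(m + w), f s := by
  set g : ℝ → ℝ := fun s => f s - (s - m) ^ 2 * f s / w ^ 2
  have int : ∀ {h : ℝ → ℝ} {x y : ℝ}, Continuous h → IntervalIntegrable h volume x y :=
    fun hh => hh.intervalIntegrable _ _
  have hg : Continuous g := by fun_prop
  have split : ∫ s in (0 : ℝ)..1, g s = (∫ s in (0 : ℝ)..(m - w), g s) +
      (∫ s in (m - w)..(m + w), g s) + ∫ s in (m + w)..1, g s := by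
    rw [intervalIntegral.integral_add_adjacent_intervals (int hg) (int hg),
      intervalIntegral.integral_add_adjacent_intervals (int hg) (int hg)]
  have outside : ∀ s ∈ Icc (0 : ℝ) 1, w ^ 2 ≤ (s - m) ^ 2 → g s ≤ 0 := fun s hs h => by
    rw [sub_nonpos, le_div_iff₀ (by positivity)]
    nlinarith [hf₀ s hs]
  have left : ∫ s in (0 : ℝ)..(m - w), g s ≤ 0 :=
    (intervalIntegral.integral_mono_on h₀ (int hg) (int continuous_const) fun s hs =>
      outside s ⟨hs.1, by linarith [hs.2]⟩ (by nlinarith [hs.2])).trans_eq (by simp)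
  have right : ∫ s in (m + w)..1, g s ≤ 0 :=
    (intervalIntegral.integral_mono_on h₁ (int hg) (int continuous_const) fun s hs =>
      outside s ⟨by linarith [hs.1], hs.2⟩ (by nlinarith [hs.1])).trans_eq (by simp)
  have middle : ∫ s in (m - w)..(m + w), g s ≤ ∫ s in (m - w)..(m + w), f s :=
    intervalIntegral.integral_mono_on (by linarith) (int hg) (int hf) fun s hs =>
      sub_le_self _ (by have := hf₀ s ⟨by linarith [hs.1], by linarith [hs.2]⟩; positivity)
  have total : ∫ s in (0 : ℝ)..1, g s =
      (∫ s in (0 : ℝ)..1, f s) - (∫ s in (0 : ℝ)..1, (s - m) ^ 2 * f s) / w ^ 2 := by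
    rw [intervalIntegral.integral_sub (int hf) (int (by fun_prop)),
      intervalIntegral.integral_div]
  calc (1 - v / w ^ 2) * ∫ s in (0 : ℝ)..1, f s
      = (∫ s in (0 : ℝ)..1, f s) - v * (∫ s in (0 : ℝ)..1, f s) / w ^ 2 := by ring
    _ ≤ ∫ s in (0 : ℝ)..1, g s := by rw [total]; gcongr
    _ ≤ ∫ s in (m - w)..(m + w), f s := by linarith

lemma mul_integral_betaKernel_le_window (a : ℕ) {b : ℕ} (hb : 0 < b) {w : ℝ} (hw : 0 < w)
    (h₀ : 0 ≤ betaCenter a b - w) (h₁ : betaCenter a b + w ≤ 1) :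
    (1 - 3 * betaVar a b / w ^ 2) * ∫ s in (0 : ℝ)..1, betaKernel a b s ≤
      ∫ s in (betaCenter a b - w)..(betaCenter a b + w), betaKernel a b s :=
  one_sub_div_sq_mul_integral_le (continuous_betaKernel a b)
    (fun _ hs => betaKernel_nonneg a b hs.1 hs.2) (integral_sq_sub_betaCenter_le a hb) hw h₀ h₁

end BetaMoments

section BetaTails

/-- The logarithmic derivative of the Beta kernel. -/
noncomputable def betaSlope (a b : ℕ) (t : ℝ) : ℝ := a / t - b / (1 - t)

-- `log` is concave, so it lies below its tangent: `s / c ≤ exp (s / c - 1)`.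
lemma betaKernel_le_mul_exp (a b : ℕ) {s c : ℝ} (hs : s ∈ Icc (0 : ℝ) 1) (hc : c ∈ Ioo (0 : ℝ) 1) :
    betaKernel a b s ≤ betaKernel a b c * Real.exp ((s - c) * betaSlope a b c) := by
  have tangent : ∀ {x y : ℝ}, 0 < y → x ≤ y * Real.exp (x / y - 1) := fun {x y} hy => by
    rw [← div_le_iff₀' hy]
    linarith [Real.add_one_le_exp (x / y - 1)]
  have hs' : 0 ≤ 1 - s := sub_nonneg.2 hs.2
  have hc' : 0 < 1 - c := sub_pos.2 hc.2
  have hc₀ := hc.1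
  calc betaKernel a b s
      ≤ (c * Real.exp (s / c - 1)) ^ a * ((1 - c) * Real.exp ((1 - s) / (1 - c) - 1)) ^ b :=
        mul_le_mul (pow_le_pow_left₀ hs.1 (tangent hc.1) a) (pow_le_pow_left₀ hs' (tangent hc') b)
          (by positivity) (by positivity)
    _ = betaKernel a b c * Real.exp (a * (s / c - 1) + b * ((1 - s) / (1 - c) - 1)) := by
        rw [betaKernel, mul_pow, mul_pow, ← Real.exp_nat_mul, ← Real.exp_nat_mul, Real.exp_add]
        ring
    _ = betaKernel a b c * Real.exp ((s - c) * betaSlope a b c) := by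
        rw [betaSlope]; congr 2; field_simp; ring

lemma betaSlope_le (a : ℕ) {b : ℕ} (hb : 0 < b) {r t : ℝ} (hr : 0 < r)
    (hrt : r * betaCenter a b ≤ t) (ht : t ≤ betaCenter a b) :
    betaSlope a b t ≤ (betaCenter a b - t) / (r * betaVar a b) := by
  have hm := betaCenter_pos a b
  have hm' : 0 < 1 - betaCenter a b := sub_pos.2 (betaCenter_lt_one a hb)
  have ht₀ : 0 < t := (mul_pos hr hm).trans_le hrt
  have ht₁ : 0 < 1 - t := by linarith
  have : (0 : ℝ) < a + b + 1 := by positivity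
  have ha : (a : ℝ) + 1 = (a + b + 1) * betaCenter a b := by unfold betaCenter; field_simp
  have hb' : (b : ℝ) = (a + b + 1) * (1 - betaCenter a b) := by
    rw [one_sub_betaCenter]; field_simp
  calc betaSlope a b t ≤ (a + 1) / t - b / (1 - t) := by unfold betaSlope; gcongr; linarith
    _ = (a + b + 1) * betaCenter a b / t - (a + b + 1) * (1 - betaCenter a b) / (1 - t) := by
        rw [← ha, ← hb']
    _ = (a + b + 1) * (betaCenter a b - t) / (t * (1 - t)) := by field_simp; ring
    _ ≤ (a + b + 1) * (betaCenter a b - t) / (r * betaCenter a b * (1 - betaCenter a b)) := by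
        have := sub_nonneg.2 ht
        gcongr
    _ = (betaCenter a b - t) / (r * betaVar a b) := by unfold betaVar; field_simp

lemma betaKernel_mul_le_integral (a b : ℕ) {c h R : ℝ} (hR : 0 < R) (hh : 0 ≤ h) (hhc : h < c)
    (hc : c < 1) (hslope : ∀ t ∈ Icc (c - h) c, betaSlope a b t ≤ R) :
    betaKernel a b c * ((1 - Real.exp (-(R * h))) / R) ≤ ∫ s in (0 : ℝ)..c, betaKernel a b s := by
  have exponential : ∫ s in (c - h)..c, Real.exp (R * (s - c)) = (1 - Real.exp (-(R * h))) / R := by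
    rw [intervalIntegral.integral_comp_sub_right (fun s => Real.exp (R * s)),
      intervalIntegral.integral_comp_mul_left _ hR.ne', integral_exp, sub_self, mul_zero,
      Real.exp_zero, smul_eq_mul, show R * (c - h - c) = -(R * h) by ring, inv_mul_eq_div]
  have pointwise : ∀ t ∈ Icc (c - h) c,
      betaKernel a b c * Real.exp (R * (t - c)) ≤ betaKernel a b t := fun t ht => by
    have ht₀ : 0 < t := by linarith [ht.1]
    have htc := betaKernel_le_mul_exp a b (s := c) (c := t) ⟨by linarith, hc.le⟩
      ⟨ht₀, ht.2.trans_lt hc⟩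
    rw [show R * (t - c) = -((c - t) * R) by ring, Real.exp_neg, ← div_eq_mul_inv,
      div_le_iff₀ (Real.exp_pos _)]
    refine htc.trans ?_
    have := betaKernel_nonneg a b ht₀.le (ht.2.trans hc.le)
    have := sub_nonneg.2 ht.2
    gcongr
    exact hslope t ht
  have left : 0 ≤ ∫ s in (0 : ℝ)..(c - h), betaKernel a b s :=
    intervalIntegral.integral_nonneg (by linarith) fun s hs =>
      betaKernel_nonneg a b hs.1 (by linarith [hs.2])
  calc betaKernel a b c * ((1 - Real.exp (-(R * h))) / R)
      = ∫ s in (c - h)..c, betaKernel a b c * Real.exp (R * (s - c)) := by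
        rw [intervalIntegral.integral_const_mul, exponential]
    _ ≤ ∫ s in (c - h)..c, betaKernel a b s :=
        intervalIntegral.integral_mono_on (by linarith)
          (Continuous.intervalIntegrable (by fun_prop) _ _)
          (intervalIntegrable_betaKernel a b _ _) pointwise
    _ ≤ ∫ s in (0 : ℝ)..c, betaKernel a b s := by
        rw [← intervalIntegral.integral_add_adjacent_intervals
          (intervalIntegrable_betaKernel a b 0 (c - h)) (intervalIntegrable_betaKernel a b _ c)]
        linarith

lemma binomialTail_mul_pow_le (n k : ℕ) {c t : ℝ} (hc : c ∈ Icc (0 : ℝ) 1) (ht : 1 ≤ t) :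
    binomialTail n k c * t ^ k ≤ (1 - c + c * t) ^ n := by
  have hc' := sub_nonneg.2 hc.2
  have hc₀ := hc.1
  have := zero_le_one.trans ht
  rw [binomialTail, Finset.sum_mul, add_comm (1 - c), add_pow]
  calc ∑ j ∈ Finset.Ico k (n + 1), (bernsteinPolynomial ℝ n j).eval c * t ^ k
      ≤ ∑ j ∈ Finset.Ico k (n + 1), (c * t) ^ j * (1 - c) ^ (n - j) * n.choose j := by
        refine Finset.sum_le_sum fun j hj => ?_
        have : t ^ k ≤ t ^ j := pow_le_pow_right₀ ht (Finset.mem_Ico.1 hj).1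
        rw [eval_bernsteinPolynomial]
        calc _ ≤ n.choose j * c ^ j * (1 - c) ^ (n - j) * t ^ j := by gcongr
          _ = _ := by ring
    _ ≤ ∑ j ∈ Finset.range (n + 1), (c * t) ^ j * (1 - c) ^ (n - j) * n.choose j := by
        rw [Finset.range_eq_Ico]
        exact Finset.sum_le_sum_of_subset_of_nonneg (Finset.Ico_subset_Ico_left k.zero_le)
          fun _ _ _ => by positivity

lemma relEntropy_le {κ m c : ℝ} (hm : 0 < m) (hm' : m < 1) (hc : 0 < c) (hcm : c ≤ m)
    (hκ : m - c ≤ κ * (m * (1 - m))) :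
    m * Real.log (c / m) + (1 - m) * Real.log ((1 - c) / (1 - m)) ≤
      -((1 - κ) * ((m - c) ^ 2 / (2 * (m * (1 - m))))) := by
  have h1m : 0 < 1 - m := sub_pos.2 hm'
  set φ : ℝ → ℝ := fun t => m * Real.log t + (1 - m) * Real.log (1 - t) +
    (1 - κ) * ((m - t) ^ 2 / (2 * (m * (1 - m))))
  have hφ : ∀ t ∈ Icc c m, HasDerivAt φ
      ((m - t) * ((t * (1 - t))⁻¹ - (1 - κ) / (m * (1 - m)))) t := fun t ht => by
    have ht₀ : 0 < t := hc.trans_le ht.1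
    have ht₁ : 0 < 1 - t := by linarith [ht.2]
    have hsub := (hasDerivAt_id t).const_sub
    convert! (((Real.hasDerivAt_log ht₀.ne').const_mul m).add (((hsub 1).log ht₁.ne').const_mul
      (1 - m))).add ((((hsub m).pow 2).div_const (2 * (m * (1 - m)))).const_mul (1 - κ)) using 1
    simp only [id_eq]
    field_simp
    ring
  have mono : MonotoneOn φ (Icc c m) := by
    refine monotoneOn_of_hasDerivWithinAt_nonneg (convex_Icc c m)
      (fun t ht => (hφ t ht).continuousAt.continuousWithinAt)
      (fun t ht => (hφ t (interior_subset ht)).hasDerivWithinAt) fun t ht => ?_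
    obtain ⟨hct, htm⟩ := interior_subset ht
    have ht₀ : 0 < t := hc.trans_le hct
    have ht₁ : 0 < 1 - t := by linarith
    refine mul_nonneg (sub_nonneg.2 htm) (sub_nonneg.2 ?_)
    have variance_le : t * (1 - t) ≤ (1 + κ) * (m * (1 - m)) := by nlinarith
    rw [div_le_iff₀ (by positivity), inv_mul_eq_div, le_div_iff₀ (by positivity)]
    rcases le_total κ 1 with hκ₁ | hκ₁
    · nlinarith [mul_le_mul_of_nonneg_left variance_le (sub_nonneg.2 hκ₁),
        mul_nonneg (sq_nonneg κ) (mul_pos hm h1m).le]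
    · nlinarith [mul_pos ht₀ ht₁, mul_pos hm h1m]
  have h := mono ⟨le_rfl, hcm⟩ ⟨hcm, le_rfl⟩ hcm
  rw [Real.log_div hc.ne' hm.ne', Real.log_div (by linarith) h1m.ne']
  simp only [φ, sub_self, ne_eq, OfNat.ofNat_ne_zero, not_false_eq_true, zero_pow, zero_div,
    mul_zero, add_zero] at h
  linarith

lemma binomialTail_le_exp_neg (a : ℕ) {b : ℕ} (hb : 0 < b) {κ d : ℝ} (hd : 0 ≤ d)
    (hdm : d < betaCenter a b) (hκ : d ≤ κ * (betaCenter a b * (1 - betaCenter a b))) :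
    binomialTail (a + b + 1) (a + 1) (betaCenter a b - d) ≤
      Real.exp (-((1 - κ) * (d ^ 2 / (2 * betaVar a b)))) := by
  have hm := betaCenter_pos a b
  have hm' : 0 < 1 - betaCenter a b := sub_pos.2 (betaCenter_lt_one a hb)
  have ha : ((a + 1 : ℕ) : ℝ) = (a + b + 1) * betaCenter a b := by
    unfold betaCenter; push_cast; field_simp
  have hn : ((a + b + 1 : ℕ) : ℝ) = a + b + 1 := by push_cast; ring
  set m := betaCenter a b with hm_def
  set c := m - d with hc_def
  have hc : 0 < c := sub_pos.2 hdm
  have hc' : 0 < 1 - c := by linarith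
  set t := m * (1 - c) / (c * (1 - m)) with ht_def
  have ht : 1 ≤ t := by rw [ht_def, le_div_iff₀ (by positivity)]; nlinarith
  have markov := binomialTail_mul_pow_le (a + b + 1) (a + 1) ⟨hc.le, by linarith⟩ ht
  rw [show 1 - c + c * t = (1 - c) / (1 - m) by rw [ht_def]; field_simp; ring,
    ← le_div_iff₀ (by positivity)] at markov
  refine markov.trans ?_
  rw [← Real.log_le_iff_le_exp (by positivity), Real.log_div (by positivity) (by positivity),
    Real.log_pow, Real.log_pow, ha, hn, show t = (c / m)⁻¹ * ((1 - c) / (1 - m)) by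
      rw [ht_def]; field_simp, Real.log_mul (by positivity) (by positivity), Real.log_inv]
  have entropy := relEntropy_le hm (sub_pos.1 hm') hc (by linarith) (by simpa [hc_def] using hκ)
  rw [show m - c = d by simp [hc_def]] at entropy
  calc _ = (a + b + 1) * (m * Real.log (c / m) + (1 - m) * Real.log ((1 - c) / (1 - m))) := by ring
    _ ≤ (a + b + 1) * -((1 - κ) * (d ^ 2 / (2 * (m * (1 - m))))) := by gcongr
    _ = _ := by rw [betaVar, ← hm_def]; field_simp

end BetaTails

section BetaQuantiles

/-- The standard deviation proxy `√(m * (1 - m) / n)` of the `Beta(a + 1, b + 1)` law. -/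
noncomputable def betaStd (a b : ℕ) : ℝ := √(betaVar a b)

lemma betaStd_pos (a : ℕ) {b : ℕ} (hb : 0 < b) : 0 < betaStd a b :=
  Real.sqrt_pos.2 (betaVar_pos a hb)

lemma betaStd_sq (a : ℕ) {b : ℕ} (hb : 0 < b) : betaStd a b ^ 2 = betaVar a b :=
  Real.sq_sqrt (betaVar_pos a hb).le

lemma betaKernel_mul_betaStd_le_integral (a : ℕ) {b : ℕ} (hb : 0 < b) {z : ℝ} (hz : 1 ≤ z)
    (hzm : z * betaStd a b ≤ betaCenter a b * (1 - betaCenter a b) / 4) :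
    betaKernel a b (betaCenter a b - z * betaStd a b) * (betaStd a b / (6 * z)) ≤
      ∫ s in (0 : ℝ)..(betaCenter a b - z * betaStd a b), betaKernel a b s := by
  have hm := betaCenter_pos a b
  have hm' := betaCenter_lt_one a hb
  have hσ := betaStd_pos a hb
  have hσ2 := betaStd_sq a hb
  set m := betaCenter a b
  set σ := betaStd a b
  have hzσ : 0 < z * σ := by positivity
  have hzm' : z * σ ≤ m / 4 := by nlinarith
  have slope : ∀ t ∈ Icc (m - z * σ - z * σ / 2) (m - z * σ), betaSlope a b t ≤ 3 * z / σ := by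
    intro t ht
    have h := betaSlope_le a hb (r := 1 / 2) (t := t) (by norm_num) (by linarith [ht.1])
      (by linarith [ht.2])
    refine h.trans ?_
    rw [← hσ2, div_le_div_iff₀ (by positivity) hσ]
    nlinarith [ht.1]
  have exp_le : Real.exp (-(3 * z / σ * (z * σ / 2))) ≤ 1 / 2 := by
    rw [show 3 * z / σ * (z * σ / 2) = 3 / 2 * z ^ 2 by field_simp, Real.exp_neg,
      inv_le_comm₀ (Real.exp_pos _) (by norm_num)]
    nlinarith [Real.add_one_le_exp (3 / 2 * z ^ 2)]
  refine le_trans ?_ (betaKernel_mul_le_integral a b (h := z * σ / 2) (R := 3 * z / σ)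
    (by positivity) (by positivity) (by linarith) (by linarith) slope)
  refine mul_le_mul_of_nonneg_left ?_ (betaKernel_nonneg a b (by linarith) (by linarith))
  rw [show σ / (6 * z) = 1 / 2 / (3 * z / σ) by field_simp; norm_num]
  gcongr
  linarith

lemma integral_betaKernel_le (a : ℕ) {b : ℕ} (hb : 0 < b) {z : ℝ} (hz : 2 ≤ z)
    (hzm : z * betaStd a b ≤ betaCenter a b * (1 - betaCenter a b) / 4) :
    ∫ s in (0 : ℝ)..1, betaKernel a b s ≤ 16 * betaStd a b *
      (betaKernel a b (betaCenter a b - z * betaStd a b) * Real.exp (4 / 3 * z * (z + 2))) := by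
  have hm := betaCenter_pos a b
  have hm' := betaCenter_lt_one a hb
  have hσ := betaStd_pos a hb
  have hσ2 := betaStd_sq a hb
  have window := mul_integral_betaKernel_le_window a hb (w := 2 * betaStd a b) (by positivity)
    (by nlinarith) (by nlinarith)
  set m := betaCenter a b
  set σ := betaStd a b
  have hzσ : 2 * σ ≤ z * σ := by gcongr
  have hzm' : z * σ ≤ m / 4 := by nlinarith
  have hc : m - z * σ ∈ Ioo (0 : ℝ) 1 := ⟨by linarith, by linarith⟩
  have slope : betaSlope a b (m - z * σ) ≤ 4 / 3 * z / σ := by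
    refine (betaSlope_le a hb (r := 3 / 4) (by norm_num) (by linarith) (by linarith)).trans ?_
    rw [← hσ2, sub_sub_cancel]
    exact le_of_eq (by field_simp)
  have pointwise : ∀ s ∈ Icc (m - 2 * σ) (m + 2 * σ),
      betaKernel a b s ≤ betaKernel a b (m - z * σ) * Real.exp (4 / 3 * z * (z + 2)) := by
    intro s hs
    refine (betaKernel_le_mul_exp a b ⟨by linarith [hs.1], by nlinarith [hs.2]⟩ hc).trans ?_
    refine mul_le_mul_of_nonneg_left (Real.exp_le_exp.2 ?_) (betaKernel_nonneg a b hc.1.le hc.2.le)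
    calc (s - (m - z * σ)) * betaSlope a b (m - z * σ)
        ≤ ((z + 2) * σ) * (4 / 3 * z / σ) :=
          (mul_le_mul_of_nonneg_left slope (by linarith [hs.1])).trans
            (mul_le_mul_of_nonneg_right (by linarith [hs.2]) (by positivity))
      _ = 4 / 3 * z * (z + 2) := by field_simp
  have integrated := intervalIntegral.integral_mono_on (by linarith)
    (intervalIntegrable_betaKernel a b _ _) (intervalIntegrable_const (μ := volume)) pointwise
  rw [intervalIntegral.integral_const, smul_eq_mul] at integrated
  rw [show 1 - 3 * betaVar a b / (2 * σ) ^ 2 = 1 / 4 by rw [← hσ2]; field_simp; norm_num] at window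
  linarith

lemma exp_neg_div_le_binomialTail (a : ℕ) {b : ℕ} (hb : 0 < b) {z : ℝ} (hz : 2 ≤ z)
    (hzm : z * betaStd a b ≤ betaCenter a b * (1 - betaCenter a b) / 4) :
    Real.exp (-(4 / 3 * z * (z + 2))) / (96 * z) ≤
      binomialTail (a + b + 1) (a + 1) (betaCenter a b - z * betaStd a b) := by
  have hm := betaCenter_pos a b
  have hm' := betaCenter_lt_one a hb
  have hσ := betaStd_pos a hb
  have lower := betaKernel_mul_betaStd_le_integral a hb (by linarith) hzm
  have upper := integral_betaKernel_le a hb hz hzm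
  have hc : 0 ≤ betaCenter a b - z * betaStd a b := by nlinarith
  rw [binomialTail_eq_div a b hc, le_div_iff₀ (integral_betaKernel_pos a b)]
  refine le_trans ?_ lower
  refine (mul_le_mul_of_nonneg_left upper (by positivity)).trans_eq ?_
  rw [Real.exp_neg]
  field_simp
  ring

end BetaQuantiles

section DilationLikelihood

/-- The likelihood ratio, with respect to the uniform law on `[0, 1]`, of `a + b + 1` independent
points uniform on `[0, 1 / (1 + θ)]`, when the points are only observed below `c` and exactly
`a + 1` of them lie there. The truncation at `0` covers `(1 + θ) * c > 1`. -/
noncomputable def dilationLikelihood (a b : ℕ) (c θ : ℝ) : ℝ :=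
  (1 + θ) ^ (a + 1) * (max 0 (1 - (1 + θ) * c) / (1 - c)) ^ b

lemma dilationLikelihood_nonneg (a b : ℕ) {c θ : ℝ} (hc : c < 1) (hθ : 0 ≤ θ) :
    0 ≤ dilationLikelihood a b c θ := by
  have := sub_pos.2 hc
  unfold dilationLikelihood; positivity

lemma continuous_dilationLikelihood (a b : ℕ) (c : ℝ) : Continuous (dilationLikelihood a b c) := by
  unfold dilationLikelihood; fun_prop

lemma intervalIntegrable_dilationLikelihood_mul_inv (a b : ℕ) (c : ℝ) {θ₀ θ₁ : ℝ} (hθ₀ : 0 < θ₀)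
    (hθ : θ₀ ≤ θ₁) :
    IntervalIntegrable (fun θ => dilationLikelihood a b c θ * θ⁻¹) volume θ₀ θ₁ := by
  refine ContinuousOn.intervalIntegrable fun θ h => ?_
  rw [uIcc_of_le hθ] at h
  exact ((continuous_dilationLikelihood a b c).continuousAt.mul
    (continuousAt_inv₀ (by linarith [h.1]))).continuousWithinAt

lemma betaKernel_mul_eq_dilationLikelihood (a b : ℕ) {c θ : ℝ} (hc : c ∈ Ioo (0 : ℝ) 1)
    (hθ : (1 + θ) * c ≤ 1) :
    (1 + θ) * betaKernel a b ((1 + θ) * c) = betaKernel a b c * dilationLikelihood a b c θ := by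
  have := sub_pos.2 hc.2
  rw [dilationLikelihood, max_eq_right (sub_nonneg.2 hθ), betaKernel, betaKernel, div_pow,
    mul_pow]
  field_simp
  ring

lemma div_mul_betaKernel_le_dilationLikelihood_mul_inv (a b : ℕ) {c y θ : ℝ}
    (hc : c ∈ Ioo (0 : ℝ) 1) (hy : y ≤ 1) (hθ : 0 < θ) (hθy : θ * c ≤ y - c) :
    c / (betaKernel a b c * (y - c)) * betaKernel a b ((1 + θ) * c) ≤
      dilationLikelihood a b c θ * θ⁻¹ := by
  have hc₀ := hc.1
  have hK := betaKernel_pos a b hc.1 hc.2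
  have hyc : 0 < y - c := (mul_pos hθ hc₀).trans_le hθy
  have hθc : (1 + θ) * c ≤ 1 := by linarith
  have hKθ := betaKernel_nonneg a b (s := (1 + θ) * c) (by positivity) hθc
  rw [← div_eq_mul_inv, div_mul_eq_mul_div, div_le_div_iff₀ (by positivity) hθ, ← mul_assoc,
    mul_comm _ (betaKernel a b c), ← betaKernel_mul_eq_dilationLikelihood a b hc hθc]
  nlinarith [mul_nonneg hθ.le (mul_nonneg hKθ hyc.le), mul_le_mul_of_nonneg_left hθy hKθ]

lemma integral_betaKernel_div_le_integral_dilationLikelihood (a b : ℕ) {c x y θ₀ θ₁ : ℝ}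
    (hc : c ∈ Ioo (0 : ℝ) 1) (hxy : x ≤ y) (hy : y ≤ 1) (hθ₀ : 0 < θ₀)
    (hx : θ₀ ≤ (x - c) / c) (hyθ : (y - c) / c ≤ θ₁) :
    (∫ s in x..y, betaKernel a b s) / (betaKernel a b c * (y - c)) ≤
      ∫ θ in θ₀..θ₁, dilationLikelihood a b c θ * θ⁻¹ := by
  have hc₀ := hc.1
  set p := (x - c) / c
  set q := (y - c) / c
  have hp : 0 < p := hθ₀.trans_le hx
  have hpq : p ≤ q := div_le_div_of_nonneg_right (by linarith) hc₀.le
  have substitution : ∫ s in x..y, betaKernel a b s =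
      c * ∫ θ in p..q, betaKernel a b ((1 + θ) * c) := by
    have h := intervalIntegral.mul_integral_comp_add_mul (a := p) (b := q) (f := betaKernel a b) c c
    rw [mul_div_cancel₀ _ hc₀.ne', mul_div_cancel₀ _ hc₀.ne', add_sub_cancel, add_sub_cancel] at h
    rw [← h]
    simp only [add_mul, one_mul, mul_comm c]
  calc (∫ s in x..y, betaKernel a b s) / (betaKernel a b c * (y - c))
      = ∫ θ in p..q, c / (betaKernel a b c * (y - c)) * betaKernel a b ((1 + θ) * c) := by
        rw [intervalIntegral.integral_const_mul, substitution]; ring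
    _ ≤ ∫ θ in p..q, dilationLikelihood a b c θ * θ⁻¹ :=
        intervalIntegral.integral_mono_on hpq
          (((continuous_betaKernel a b).comp (by fun_prop)).const_mul _ |>.intervalIntegrable _ _)
          (intervalIntegrable_dilationLikelihood_mul_inv a b c hp hpq) fun θ hθ =>
            div_mul_betaKernel_le_dilationLikelihood_mul_inv a b hc hy (hp.trans_le hθ.1)
              ((le_div_iff₀ hc₀).1 hθ.2)
    _ ≤ ∫ θ in θ₀..θ₁, dilationLikelihood a b c θ * θ⁻¹ :=
        intervalIntegral.integral_mono_interval hx hpq hyθ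
          ((ae_restrict_iff' measurableSet_Ioc).2 <| .of_forall fun θ hθ =>
            mul_nonneg (dilationLikelihood_nonneg a b hc.2 (hθ₀.trans hθ.1).le)
              (inv_nonneg.2 (hθ₀.trans hθ.1).le))
          (intervalIntegrable_dilationLikelihood_mul_inv a b c hθ₀ (hx.trans (hpq.trans hyθ)))

lemma one_sub_le_one_sub_exp_neg {κ y : ℝ} (hκ : 0 < κ) (hy : 1 / κ ≤ y) :
    1 - κ ≤ 1 - Real.exp (-y) := by
  have h : κ⁻¹ ≤ Real.exp y := by linarith [Real.add_one_le_exp y, one_div κ]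
  rw [Real.exp_neg, sub_le_sub_iff_left]
  exact inv_le_of_inv_le₀ hκ h

lemma betaKernel_mul_betaVar_div_le_integral (a : ℕ) {b : ℕ} (hb : 0 < b) {κ d : ℝ} (hκ : 0 < κ)
    (hκ₁ : κ < 1) (hd : 0 < d) (hdm : d ≤ κ / 2 * (betaCenter a b * (1 - betaCenter a b)))
    (hVd : betaVar a b ≤ κ ^ 2 * d ^ 2) :
    betaKernel a b (betaCenter a b - d) * ((1 - κ) ^ 2 / (1 + κ) * (betaVar a b / d)) ≤
      ∫ s in (0 : ℝ)..(betaCenter a b - d), betaKernel a b s := by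
  have hm := betaCenter_pos a b
  have hm' := betaCenter_lt_one a hb
  have hV := betaVar_pos a hb
  set m := betaCenter a b
  set V := betaVar a b
  have h1κ := sub_pos.2 hκ₁
  have hdm' : (1 + κ) * d ≤ κ * m := by
    nlinarith [mul_pos hκ (mul_pos hm (sub_pos.2 hm')), mul_pos hκ hm, mul_pos hm hm]
  have hκm : κ * m < m := mul_lt_of_lt_one_left hm hκ₁
  set R := (1 + κ) * d / ((1 - κ) * V) with hR
  have slope : ∀ t ∈ Icc (m - d - κ * d) (m - d), betaSlope a b t ≤ R := fun t ht =>
    (betaSlope_le a hb h1κ (by linarith [ht.1]) (by linarith [ht.2])).trans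
      (by rw [hR]; gcongr; linarith [ht.1])
  have mills := betaKernel_mul_le_integral a b (R := R) (h := κ * d) (by positivity) (by positivity)
    (by linarith) (by linarith) slope
  have saturated : 1 - κ ≤ 1 - Real.exp (-(R * (κ * d))) := by
    refine one_sub_le_one_sub_exp_neg hκ ?_
    rw [hR, div_mul_eq_mul_div, div_le_div_iff₀ hκ (by positivity)]
    nlinarith [mul_le_mul_of_nonneg_left hVd h1κ.le, mul_pos (pow_pos hκ 3) (pow_pos hd 2)]
  refine le_trans (mul_le_mul_of_nonneg_left ?_
    (betaKernel_nonneg a b (by nlinarith) (by linarith))) mills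
  calc (1 - κ) ^ 2 / (1 + κ) * (V / d) = (1 - κ) / R := by rw [hR]; field_simp
    _ ≤ _ := by gcongr

lemma betaVar_div_sq_le_binomialTail_mul (a : ℕ) {b : ℕ} (hb : 0 < b) {κ d : ℝ} (hκ : 0 < κ)
    (hκ₁ : κ < 1) (hd : 0 < d) (hdm : d ≤ κ / 2 * (betaCenter a b * (1 - betaCenter a b)))
    (hVd : 4 / κ ^ 3 * betaVar a b ≤ d ^ 2) :
    (1 - κ) ^ 3 / (1 + κ) ^ 2 * (betaVar a b / d ^ 2) ≤
      binomialTail (a + b + 1) (a + 1) (betaCenter a b - d) *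
        ((∫ s in (betaCenter a b - κ * d)..(betaCenter a b + κ * d), betaKernel a b s) /
          (betaKernel a b (betaCenter a b - d) * ((1 + κ) * d))) := by
  have hm := betaCenter_pos a b
  have hm' := betaCenter_lt_one a hb
  have hV := betaVar_pos a hb
  have h1κ := sub_pos.2 hκ₁
  have hVd' : 4 * betaVar a b ≤ κ ^ 3 * d ^ 2 := by
    rwa [div_mul_eq_mul_div, div_le_iff₀' (by positivity)] at hVd
  have hq : 0 < betaCenter a b * (1 - betaCenter a b) := mul_pos hm (sub_pos.2 hm')
  have hdm' : d < betaCenter a b := by nlinarith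
  have hκd : κ * d ≤ d := mul_le_of_le_one_left hd.le hκ₁.le
  have hκ₂ : κ ^ 3 ≤ κ ^ 2 := pow_le_pow_of_le_one hκ.le hκ₁.le (by norm_num)
  have mills := betaKernel_mul_betaVar_div_le_integral a hb hκ hκ₁ hd hdm
    (by nlinarith [sq_nonneg d])
  have window := mul_integral_betaKernel_le_window a hb (w := κ * d) (by positivity) (by linarith)
    (by nlinarith)
  have chebyshev : 1 - κ ≤ 1 - 3 * betaVar a b / (κ * d) ^ 2 := by
    rw [sub_le_sub_iff_left, div_le_iff₀ (by positivity)]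
    nlinarith
  have hI := integral_betaKernel_pos a b
  have hK := betaKernel_pos a b (sub_pos.2 hdm') (by linarith)
  rw [binomialTail_eq_div a b (by linarith)]
  calc (1 - κ) ^ 3 / (1 + κ) ^ 2 * (betaVar a b / d ^ 2)
      = betaKernel a b (betaCenter a b - d) * ((1 - κ) ^ 2 / (1 + κ) * (betaVar a b / d)) /
          (∫ s in (0 : ℝ)..1, betaKernel a b s) * (((1 - κ) * ∫ s in (0 : ℝ)..1, betaKernel a b s) /
            (betaKernel a b (betaCenter a b - d) * ((1 + κ) * d))) := by field_simp
    _ ≤ _ := by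
        gcongr
        · exact div_nonneg (le_trans (by positivity) mills) hI.le
        · exact (mul_le_mul_of_nonneg_right chebyshev hI.le).trans window

/-- The range of parameters in which crossings are controlled: the level `δ` is between two
exponentially small bounds, so that the `δ`-quantile of a Beta law lies between `4 / κ ^ 3` and
`√((2 + 4 * κ) * L)` standard deviations below its center. In the application `L = log (log n)`
and `κ` is fixed. -/
structure LevelRegime (κ L δ : ℝ) : Prop where
  κ_pos : 0 < κ
  κ_lt : κ < 1 / 2
  le_L : 16 / κ ^ 3 ≤ L
  δ_pos : 0 < δ
  δ_lt : δ < Real.exp (-(4 / 3 * (4 / κ ^ 3) * (4 / κ ^ 3 + 2))) / (96 * (4 / κ ^ 3))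
  le_δ : Real.exp (-((1 - κ) * (1 + 2 * κ) * L)) ≤ δ

namespace LevelRegime

variable {κ L δ c : ℝ} {a b : ℕ}

lemma L_pos (h : LevelRegime κ L δ) : 0 < L :=
  lt_of_lt_of_le (by have := h.κ_pos; positivity) h.le_L

lemma two_le_depth (h : LevelRegime κ L δ) : 2 ≤ 4 / κ ^ 3 := by
  rw [le_div_iff₀ (pow_pos h.κ_pos 3)]
  have := pow_le_one₀ (n := 3) h.κ_pos.le (by linarith [h.κ_lt])
  linarith

lemma quantile_lt (h : LevelRegime κ L δ) (hb : 0 < b)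
    (hbulk : L * betaStd a b ≤ betaCenter a b * (1 - betaCenter a b))
    (hc : c ∈ Ioo (0 : ℝ) 1) (htail : binomialTail (a + b + 1) (a + 1) c = δ) :
    c < betaCenter a b - 4 / κ ^ 3 * betaStd a b := by
  have hm := betaCenter_pos a b
  have hm' := betaCenter_lt_one a hb
  have hσ := betaStd_pos a hb
  have hz := h.two_le_depth
  have hzσ : 4 / κ ^ 3 * betaStd a b ≤ betaCenter a b * (1 - betaCenter a b) / 4 := by
    have : 4 / κ ^ 3 ≤ L / 4 := by linarith [h.le_L, show 16 / κ ^ 3 = 4 * (4 / κ ^ 3) by ring]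
    nlinarith
  rw [← (strictMonoOn_binomialTail a b).lt_iff_lt ⟨hc.1.le, hc.2.le⟩
    ⟨by nlinarith, by nlinarith⟩, htail]
  exact h.δ_lt.trans_le (exp_neg_div_le_binomialTail a hb hz hzσ)

lemma sqrt_mul_betaStd_le (h : LevelRegime κ L δ)
    (hbulk : L * betaStd a b ≤ betaCenter a b * (1 - betaCenter a b)) :
    √((2 + 4 * κ) * L) * betaStd a b ≤ κ / 2 * (betaCenter a b * (1 - betaCenter a b)) := by
  have hκ := h.κ_pos
  have hL := h.L_pos
  have hκL : 16 ≤ κ ^ 2 * L := by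
    have := (div_le_iff₀ (by positivity)).1 h.le_L
    nlinarith [h.κ_lt, mul_pos hL (pow_pos hκ 2)]
  have : √((2 + 4 * κ) * L) ≤ κ / 2 * L := Real.sqrt_le_iff.2 ⟨by positivity, by
    nlinarith [mul_le_mul_of_nonneg_right hκL hL.le, mul_lt_mul_of_pos_right h.κ_lt hL]⟩
  calc √((2 + 4 * κ) * L) * betaStd a b ≤ κ / 2 * L * betaStd a b :=
        mul_le_mul_of_nonneg_right this (Real.sqrt_nonneg _)
    _ ≤ _ := by rw [mul_assoc]; gcongr

lemma sub_le_quantile (h : LevelRegime κ L δ) (hb : 0 < b)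
    (hbulk : L * betaStd a b ≤ betaCenter a b * (1 - betaCenter a b))
    (hc : c ∈ Ioo (0 : ℝ) 1) (htail : binomialTail (a + b + 1) (a + 1) c = δ) :
    betaCenter a b - √((2 + 4 * κ) * L) * betaStd a b ≤ c := by
  have hm := betaCenter_pos a b
  have hm' := betaCenter_lt_one a hb
  have hσ := betaStd_pos a hb
  have hκ := h.κ_pos
  have hκ' := h.κ_lt
  have hL := h.L_pos
  have hq : 0 < betaCenter a b * (1 - betaCenter a b) := mul_pos hm (sub_pos.2 hm')
  have hD := h.sqrt_mul_betaStd_le hbulk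
  have hDm : √((2 + 4 * κ) * L) * betaStd a b < betaCenter a b := by nlinarith
  rw [← (strictMonoOn_binomialTail a b).le_iff_le
    ⟨by linarith, by linarith [mul_nonneg (Real.sqrt_nonneg ((2 + 4 * κ) * L)) hσ.le]⟩
    ⟨hc.1.le, hc.2.le⟩, htail]
  refine (binomialTail_le_exp_neg a hb (κ := κ) (by positivity) hDm (by nlinarith)).trans
    (le_trans (le_of_eq ?_) h.le_δ)
  rw [← betaStd_sq a hb, mul_pow, Real.sq_sqrt (by positivity)]
  congr 2
  field_simp
  ring

lemma sqrt_le_two_mul_sqrt (h : LevelRegime κ L δ) : √((2 + 4 * κ) * L) ≤ 2 * √L := by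
  have := h.L_pos
  have := h.κ_lt
  refine Real.sqrt_le_iff.2 ⟨by positivity, ?_⟩
  rw [mul_pow, Real.sq_sqrt h.L_pos.le]
  nlinarith

lemma half_betaCenter_le_quantile (h : LevelRegime κ L δ) (hb : 0 < b)
    (hbulk : L * betaStd a b ≤ betaCenter a b * (1 - betaCenter a b))
    (hc : c ∈ Ioo (0 : ℝ) 1) (htail : binomialTail (a + b + 1) (a + 1) c = δ) :
    betaCenter a b / 2 ≤ c := by
  have hm := betaCenter_pos a b
  have hq : betaCenter a b * (1 - betaCenter a b) ≤ betaCenter a b := by nlinarith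
  have hκ := mul_le_mul h.κ_lt.le hq
    (mul_pos hm (sub_pos.2 (betaCenter_lt_one a hb))).le (by norm_num)
  linarith [h.sub_le_quantile hb hbulk hc htail, h.sqrt_mul_betaStd_le hbulk]

lemma inv_le_betaVar_div_sq (h : LevelRegime κ L δ) (hb : 0 < b)
    (hbulk : L * betaStd a b ≤ betaCenter a b * (1 - betaCenter a b))
    (hc : c ∈ Ioo (0 : ℝ) 1) (htail : binomialTail (a + b + 1) (a + 1) c = δ)
    (hcm : c < betaCenter a b) :
    1 / ((2 + 4 * κ) * L) ≤ betaVar a b / (betaCenter a b - c) ^ 2 := by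
  have := sub_pos.2 hcm
  have := h.κ_pos
  have := h.L_pos
  rw [div_le_div_iff₀ (by positivity) (by positivity), one_mul, ← betaStd_sq a hb]
  calc (betaCenter a b - c) ^ 2 ≤ (√((2 + 4 * κ) * L) * betaStd a b) ^ 2 := by
        gcongr
        linarith [h.sub_le_quantile hb hbulk hc htail]
    _ = _ := by rw [mul_pow, Real.sq_sqrt (by positivity)]; ring

lemma relDist_quantile_le (h : LevelRegime κ L δ) (hb : 0 < b)
    (hbulk : L * betaStd a b ≤ betaCenter a b * (1 - betaCenter a b))
    (hc : c ∈ Ioo (0 : ℝ) 1) (htail : binomialTail (a + b + 1) (a + 1) c = δ) :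
    (1 + κ) * (betaCenter a b - c) / c ≤ 6 * √L * (betaStd a b / betaCenter a b) := by
  have hm := betaCenter_pos a b
  have hσ := betaStd_pos a hb
  have hcm := h.half_betaCenter_le_quantile hb hbulk hc htail
  have hd₀ : 0 ≤ betaCenter a b - c := by
    have := mul_pos (zero_lt_two.trans_le h.two_le_depth) hσ
    linarith [h.quantile_lt hb hbulk hc htail]
  have hd : betaCenter a b - c ≤ 2 * √L * betaStd a b := by
    linarith [h.sub_le_quantile hb hbulk hc htail,
      mul_le_mul_of_nonneg_right h.sqrt_le_two_mul_sqrt hσ.le]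
  calc (1 + κ) * (betaCenter a b - c) / c
      ≤ 3 / 2 * (2 * √L * betaStd a b) / (betaCenter a b / 2) := by
        have := h.κ_lt
        have := h.κ_pos
        gcongr
        linarith
    _ = _ := by field_simp; ring

lemma le_integral_dilationLikelihood (h : LevelRegime κ L δ) (hb : 0 < b)
    (hbulk : L * betaStd a b ≤ betaCenter a b * (1 - betaCenter a b))
    (hc : c ∈ Ioo (0 : ℝ) 1) (htail : binomialTail (a + b + 1) (a + 1) c = δ)
    {θ₀ θ₁ : ℝ} (hθ₀ : 0 < θ₀) (hθ₀σ : θ₀ ≤ betaStd a b / betaCenter a b)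
    (hθ₁σ : 6 * √L * (betaStd a b / betaCenter a b) ≤ θ₁) :
    (1 - κ) ^ 3 / ((1 + κ) ^ 2 * (2 + 4 * κ) * L * δ) ≤
      ∫ θ in θ₀..θ₁, dilationLikelihood a b c θ * θ⁻¹ := by
  obtain ⟨hκ, hκ', -, hδ, -, -⟩ := id h
  have hL := h.L_pos
  have h1κ : 0 < 1 - κ := by linarith
  have hm := betaCenter_pos a b
  have hm' := sub_pos.2 (betaCenter_lt_one a hb)
  have hσ := betaStd_pos a hb
  have hz := h.two_le_depth
  have upper := h.quantile_lt hb hbulk hc htail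
  have hσd : 4 / κ ^ 3 * betaStd a b ≤ betaCenter a b - c := by linarith
  have hσd' : 2 * betaStd a b ≤ betaCenter a b - c :=
    (mul_le_mul_of_nonneg_right hz hσ.le).trans hσd
  have depth := h.inv_le_betaVar_div_sq hb hbulk hc htail (by linarith)
  have range := h.relDist_quantile_le hb hbulk hc htail
  have hdq := (sub_le_comm.1 (h.sub_le_quantile hb hbulk hc htail)).trans
    (h.sqrt_mul_betaStd_le hbulk)
  obtain ⟨d, rfl⟩ : ∃ d, c = betaCenter a b - d := ⟨betaCenter a b - c, by ring⟩
  rw [sub_sub_cancel] at depth range hσd hσd' hdq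
  have hd : 0 < d := by linarith
  have hκd : κ * d ≤ d / 2 := by nlinarith
  have hdm' : d ≤ 1 - betaCenter a b := by nlinarith [mul_pos hm hm']
  have hVd : 4 / κ ^ 3 * betaVar a b ≤ d ^ 2 := by
    rw [← betaStd_sq a hb]; nlinarith
  have window := betaVar_div_sq_le_binomialTail_mul a hb hκ (by linarith) hd hdq hVd
  have dilation := integral_betaKernel_div_le_integral_dilationLikelihood a b
    (x := betaCenter a b - κ * d) (y := betaCenter a b + κ * d) hc (by nlinarith) (by linarith) hθ₀
    (hθ₀σ.trans <| div_le_div₀ (by linarith) (by linarith) hc.1 (by linarith))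
    (le_trans (by rwa [show betaCenter a b + κ * d - (betaCenter a b - d) = (1 + κ) * d by ring])
      hθ₁σ)
  rw [show betaCenter a b + κ * d - (betaCenter a b - d) = (1 + κ) * d by ring] at dilation
  rw [htail] at window
  calc (1 - κ) ^ 3 / ((1 + κ) ^ 2 * (2 + 4 * κ) * L * δ)
      = (1 - κ) ^ 3 / (1 + κ) ^ 2 * (1 / ((2 + 4 * κ) * L)) / δ := by field_simp
    _ ≤ (1 - κ) ^ 3 / (1 + κ) ^ 2 * (betaVar a b / d ^ 2) / δ := by gcongr
    _ ≤ _ := (div_le_iff₀' hδ).2 (window.trans (by gcongr))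

end LevelRegime

end DilationLikelihood

section Counting

variable {ι : Type*} [Fintype ι]

/-- The number of coordinates of `u` that are strictly below `c`. -/
noncomputable def countBelow (u : ι → ℝ) (c : ℝ) : ℕ := Finset.card {j | u j < c}

lemma measurable_countBelow (c : ℝ) : Measurable fun u : ι → ℝ => countBelow u c := by
  simp only [countBelow, Finset.card_filter]
  exact Finset.measurable_sum _ fun j _ => Measurable.ite
    (measurableSet_lt (measurable_pi_apply j) measurable_const) measurable_const measurable_const

lemma measurableSet_countBelow_le (c : ℝ) (k : ℕ) :
    MeasurableSet {u : ι → ℝ | countBelow u c ≤ k} :=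
  measurableSet_le (measurable_countBelow c) measurable_const

lemma countBelow_anti {u v : ι → ℝ} (huv : u ≤ v) (c : ℝ) : countBelow v c ≤ countBelow u c :=
  Finset.card_le_card <| Finset.monotone_filter_right _ fun j _ hj => (huv j).trans_lt hj

lemma le_orderStat_of_countBelow_le {n : ℕ} {u : Fin n → ℝ} {c : ℝ} {i : Fin n}
    (h : countBelow u c ≤ i) : c ≤ orderStat u i := by
  by_contra! hlt
  have hsub : (Finset.Iic i).map (Tuple.sort u).toEmbedding ⊆
      Finset.univ.filter (u · < c) := by
    intro j hj
    obtain ⟨k, hk, rfl⟩ := Finset.mem_map.1 hj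
    exact Finset.mem_filter.2
      ⟨Finset.mem_univ _, (Tuple.monotone_sort u (Finset.mem_Iic.1 hk)).trans_lt hlt⟩
  have hcard := Finset.card_le_card hsub
  rw [Finset.card_map, Fin.card_Iic] at hcard
  exact absurd (hcard.trans h) (by lia)

lemma measureReal_filter_lt_eq (μ : Measure ℝ) [IsProbabilityMeasure μ] (c : ℝ) (S : Finset ι) :
    (Measure.pi fun _ : ι => μ).real
        {u : ι → ℝ | Finset.univ.filter (u · < c) = S} =
      μ.real (Iio c) ^ S.card * (1 - μ.real (Iio c)) ^ (Fintype.card ι - S.card) := by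
  classical
  have box : {u : ι → ℝ | Finset.univ.filter (u · < c) = S} =
      univ.pi fun j => if j ∈ S then Iio c else Ici c := by
    ext u
    simp only [mem_ofPred_eq, Finset.ext_iff, Finset.mem_filter, Finset.mem_univ, true_and,
      mem_univ_pi]
    refine forall_congr' fun j => ?_
    split_ifs with h <;> simp [h]
  have marginal : ∀ j, μ.real (if j ∈ S then Iio c else Ici c) =
      if j ∈ S then μ.real (Iio c) else 1 - μ.real (Iio c) := fun j => by
    split_ifs
    · rfl
    · rw [← compl_Iio, probReal_compl_eq_one_sub measurableSet_Iio]
  rw [box, measureReal_def, Measure.pi_pi, ENNReal.toReal_prod]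
  simp only [← measureReal_def, marginal, Finset.prod_ite, Finset.prod_const,
    Finset.filter_mem_eq_inter, Finset.univ_inter, Finset.filter_notMem_eq_sdiff]
  rw [← Finset.compl_eq_univ_sdiff, Finset.card_compl]

lemma measureReal_le_countBelow (μ : Measure ℝ) [IsProbabilityMeasure μ] (k : ℕ) (c : ℝ) :
    (Measure.pi fun _ : ι => μ).real {u | k ≤ countBelow u c} =
      binomialTail (Fintype.card ι) k (μ.real (Iio c)) := by
  classical
  set p := μ.real (Iio c)
  let below (u : ι → ℝ) : Finset ι := Finset.univ.filter (u · < c)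
  have measurableSet_fiber : ∀ S, MeasurableSet (below ⁻¹' {S}) := fun S => by
    have : below ⁻¹' {S} = ⋂ j, {u : ι → ℝ | u j < c ↔ j ∈ S} := by
      ext u
      simp [below, Finset.ext_iff]
    rw [this]
    exact MeasurableSet.iInter fun j =>
      (measurableSet_lt (measurable_pi_apply j) measurable_const).iff (.const _)
  have union : {u : ι → ℝ | k ≤ countBelow u c} =
      below ⁻¹' ↑(Finset.univ.filter fun S : Finset ι => k ≤ S.card) := by
    ext u
    simp [below, countBelow]
  rw [union, ← sum_measureReal_preimage_singleton _ fun S _ => measurableSet_fiber S]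
  calc ∑ S with k ≤ S.card, (Measure.pi fun _ : ι => μ).real (below ⁻¹' {S})
    _ = ∑ S with k ≤ S.card, p ^ S.card * (1 - p) ^ (Fintype.card ι - S.card) :=
      Finset.sum_congr rfl fun S _ => by
        rw [← measureReal_filter_lt_eq μ c S]
        rfl
    _ = ∑ S ∈ (Finset.univ : Finset ι).powerset,
          if k ≤ S.card then p ^ S.card * (1 - p) ^ (Fintype.card ι - S.card) else 0 := by
      rw [Finset.sum_filter, Finset.powerset_univ]
    _ = binomialTail (Fintype.card ι) k p := by
      rw [Finset.sum_powerset_apply_card fun m =>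
        if k ≤ m then p ^ m * (1 - p) ^ (Fintype.card ι - m) else 0, binomialTail,
        show Finset.Ico k (Fintype.card ι + 1) =
          Finset.filter (k ≤ ·) (Finset.range (Fintype.card ι + 1)) by grind, Finset.sum_filter]
      simp [Finset.card_univ, eval_bernsteinPolynomial, mul_assoc]

end Counting

section UnitUniform

/-- The uniform law on `[0, 1]`. -/
noncomputable def unitUniform : Measure ℝ := volume.restrict (Icc 0 1)

instance : IsProbabilityMeasure unitUniform := ⟨by simp [unitUniform]⟩

lemma unitUniform_real_Iio {c : ℝ} (hc : c ∈ Icc (0 : ℝ) 1) : unitUniform.real (Iio c) = c := by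
  rw [measureReal_def, unitUniform, Measure.restrict_apply measurableSet_Iio,
    show Iio c ∩ Icc 0 1 = Ico 0 c by grind, Real.volume_Ico, sub_zero, ENNReal.toReal_ofReal hc.1]

end UnitUniform

section PositiveAssociation

variable {α β : Type*} [MeasurableSpace α] [MeasurableSpace β]

/-- A measure on an ordered space is positively associated if any two increasing functions on it
are nonnegatively correlated. Test functions with values in `[0, 1]` suffice, and spare all
integrability conditions. -/
def PositivelyAssociated [Preorder α] (μ : Measure α) : Prop :=
  ∀ ⦃f g : α → ℝ⦄, Measurable f → Measurable g → Monotone f → Monotone g →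
    (∀ x, f x ∈ Icc (0 : ℝ) 1) → (∀ x, g x ∈ Icc (0 : ℝ) 1) →
    (∫ x, f x ∂μ) * (∫ x, g x ∂μ) ≤ ∫ x, f x * g x ∂μ

lemma integrable_of_mem_Icc_zero_one (μ : Measure α) [IsProbabilityMeasure μ] {f : α → ℝ}
    (hf : Measurable f) (hf₀₁ : ∀ x, f x ∈ Icc (0 : ℝ) 1) : Integrable f μ :=
  .of_mem_Icc 0 1 hf.aemeasurable (.of_forall hf₀₁)

lemma integral_mem_Icc_zero_one (μ : Measure α) [IsProbabilityMeasure μ] {f : α → ℝ}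
    (hf : Measurable f) (hf₀₁ : ∀ x, f x ∈ Icc (0 : ℝ) 1) : ∫ x, f x ∂μ ∈ Icc (0 : ℝ) 1 :=
  (convex_Icc 0 1).integral_mem isClosed_Icc (.of_forall hf₀₁)
    (integrable_of_mem_Icc_zero_one μ hf hf₀₁)

lemma mul_mem_Icc_zero_one {x y : ℝ} (hx : x ∈ Icc (0 : ℝ) 1) (hy : y ∈ Icc (0 : ℝ) 1) :
    x * y ∈ Icc (0 : ℝ) 1 :=
  ⟨mul_nonneg hx.1 hy.1, mul_le_one₀ hx.2 hy.1 hy.2⟩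

namespace PositivelyAssociated

/-- The correlation is half the double integral of `(f s - f t) * (g s - g t) ≥ 0`. -/
lemma of_linearOrder [LinearOrder α] (μ : Measure α) [IsProbabilityMeasure μ] :
    PositivelyAssociated μ := by
  intro f g hf hg f_mono g_mono hf₀₁ hg₀₁
  have f_int := integrable_of_mem_Icc_zero_one μ hf hf₀₁
  have g_int := integrable_of_mem_Icc_zero_one μ hg hg₀₁
  have fg_int : Integrable (fun x => f x * g x) μ := integrable_of_mem_Icc_zero_one μ (hf.mul hg)
    fun x => mul_mem_Icc_zero_one (hf₀₁ x) (hg₀₁ x)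
  have inner (s : α) : ∫ t, (f s - f t) * (g s - g t) ∂μ =
      f s * g s - f s * (∫ t, g t ∂μ) - g s * (∫ t, f t ∂μ) + ∫ t, f t * g t ∂μ := by
    have expand (t : α) : (f s - f t) * (g s - g t) =
        f s * g s - f s * g t - g s * f t + f t * g t := by ring
    simp_rw [expand]
    rw [integral_add (by fun_prop) fg_int, integral_sub (by fun_prop) (by fun_prop),
      integral_sub (by fun_prop) (by fun_prop), integral_const, integral_const_mul,
      integral_const_mul, probReal_univ, one_smul]
  have outer : ∫ s, ∫ t, (f s - f t) * (g s - g t) ∂μ ∂μ =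
      2 * ((∫ t, f t * g t ∂μ) - (∫ t, f t ∂μ) * ∫ t, g t ∂μ) := by
    simp_rw [inner]
    rw [integral_add (by fun_prop) (by fun_prop), integral_sub (by fun_prop) (by fun_prop),
      integral_sub (by fun_prop) (by fun_prop), integral_mul_const, integral_mul_const,
      integral_const, probReal_univ, one_smul]
    ring
  have nonneg : 0 ≤ ∫ s, ∫ t, (f s - f t) * (g s - g t) ∂μ ∂μ := by
    refine integral_nonneg fun s => integral_nonneg fun t => ?_
    rcases le_total s t with hst | hts
    · exact mul_nonneg_of_nonpos_of_nonpos (sub_nonpos.2 (f_mono hst)) (sub_nonpos.2 (g_mono hst))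
    · exact mul_nonneg (sub_nonneg.2 (f_mono hts)) (sub_nonneg.2 (g_mono hts))
  linarith

lemma map [Preorder α] [Preorder β] {μ : Measure α} (hμ : PositivelyAssociated μ) {φ : α → β}
    (hφ : Measurable φ) (φ_mono : Monotone φ) : PositivelyAssociated (μ.map φ) := by
  intro f g hf hg f_mono g_mono hf₀₁ hg₀₁
  rw [integral_map hφ.aemeasurable hf.aestronglyMeasurable,
    integral_map hφ.aemeasurable hg.aestronglyMeasurable,
    integral_map (f := fun y => f y * g y) hφ.aemeasurable (hf.mul hg).aestronglyMeasurable]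
  exact hμ (hf.comp hφ) (hg.comp hφ) (f_mono.comp φ_mono) (g_mono.comp φ_mono)
    (fun x => hf₀₁ (φ x)) fun x => hg₀₁ (φ x)

lemma prod [Preorder α] [Preorder β] {μ : Measure α} {ν : Measure β} [IsProbabilityMeasure μ]
    [IsProbabilityMeasure ν] (hμ : PositivelyAssociated μ) (hν : PositivelyAssociated ν) :
    PositivelyAssociated (μ.prod ν) := by
  have measurable_section {f : α × β → ℝ} (hf : Measurable f) (x : α) :
      Measurable fun y => f (x, y) := by fun_prop
  have measurable_marginal {f : α × β → ℝ} (hf : Measurable f) :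
      Measurable fun x => ∫ y, f (x, y) ∂ν := hf.stronglyMeasurable.integral_prod_right'.measurable
  have marginal_mono {f : α × β → ℝ} (hf : Measurable f) (f_mono : Monotone f)
      (hf₀₁ : ∀ z, f z ∈ Icc (0 : ℝ) 1) : Monotone fun x => ∫ y, f (x, y) ∂ν := fun x x' hx =>
    integral_mono (integrable_of_mem_Icc_zero_one ν (measurable_section hf x) fun _ => hf₀₁ _)
      (integrable_of_mem_Icc_zero_one ν (measurable_section hf x') fun _ => hf₀₁ _)
      fun y => f_mono (Prod.mk_le_mk.2 ⟨hx, le_rfl⟩)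
  have marginal_mem {f : α × β → ℝ} (hf : Measurable f) (hf₀₁ : ∀ z, f z ∈ Icc (0 : ℝ) 1) (x : α) :
      ∫ y, f (x, y) ∂ν ∈ Icc (0 : ℝ) 1 :=
    integral_mem_Icc_zero_one ν (measurable_section hf x) fun _ => hf₀₁ _
  intro f g hf hg f_mono g_mono hf₀₁ hg₀₁
  have hfg : Measurable fun z => f z * g z := hf.mul hg
  have hfg₀₁ : ∀ z, f z * g z ∈ Icc (0 : ℝ) 1 := fun z => mul_mem_Icc_zero_one (hf₀₁ z) (hg₀₁ z)
  rw [integral_prod _ (integrable_of_mem_Icc_zero_one _ hf hf₀₁),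
    integral_prod _ (integrable_of_mem_Icc_zero_one _ hg hg₀₁),
    integral_prod _ (integrable_of_mem_Icc_zero_one _ hfg hfg₀₁)]
  refine (hμ (measurable_marginal hf) (measurable_marginal hg) (marginal_mono hf f_mono hf₀₁)
    (marginal_mono hg g_mono hg₀₁) (marginal_mem hf hf₀₁) (marginal_mem hg hg₀₁)).trans ?_
  refine integral_mono (integrable_of_mem_Icc_zero_one μ
      ((measurable_marginal hf).mul (measurable_marginal hg))
      fun x => mul_mem_Icc_zero_one (marginal_mem hf hf₀₁ x) (marginal_mem hg hg₀₁ x))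
    (integrable_of_mem_Icc_zero_one μ (measurable_marginal hfg) (marginal_mem hfg hfg₀₁))
    fun x => ?_
  exact hν (measurable_section hf x) (measurable_section hg x)
    (fun y y' hy => f_mono (Prod.mk_le_mk.2 ⟨le_rfl, hy⟩))
    (fun y y' hy => g_mono (Prod.mk_le_mk.2 ⟨le_rfl, hy⟩)) (fun _ => hf₀₁ _) fun _ => hg₀₁ _

/-- **Harris' inequality**. -/
lemma pi [LinearOrder α] (μ : Measure α) [IsProbabilityMeasure μ] (n : ℕ) :
    PositivelyAssociated (Measure.pi fun _ : Fin n => μ) := by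
  induction n with
  | zero =>
    intro f g _ _ _ _ _ _
    rw [Measure.pi_of_empty _ isEmptyElim]
    simp
  | succ n ih =>
    rw [← ((measurePreserving_piFinSuccAbove (fun _ : Fin (n + 1) => μ) 0).symm).map_eq]
    refine ((of_linearOrder μ).prod ih).map (MeasurableEquiv.measurable _) fun z z' hz => ?_
    refine Fin.cases ?_ fun j => ?_
    · exact hz.1
    · exact hz.2 j

lemma mul_measureReal_le_inter [Preorder α] {μ : Measure α} (hμ : PositivelyAssociated μ)
    {A B : Set α} (hA : MeasurableSet A) (hB : MeasurableSet B) (A_upper : IsUpperSet A)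
    (B_upper : IsUpperSet B) : μ.real A * μ.real B ≤ μ.real (A ∩ B) := by
  have indicator_mono {A : Set α} (A_upper : IsUpperSet A) : Monotone (A.indicator (1 : α → ℝ)) :=
    fun x y hxy => by
      by_cases hx : x ∈ A
      · simp [hx, A_upper hxy hx]
      · rw [indicator_of_notMem hx]
        exact indicator_nonneg (fun _ _ => zero_le_one) y
  have indicator_mem (A : Set α) (x : α) : A.indicator (1 : α → ℝ) x ∈ Icc (0 : ℝ) 1 := by
    by_cases hx : x ∈ A <;> simp [hx]
  have := hμ (measurable_one.indicator hA) (measurable_one.indicator hB)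
    (indicator_mono A_upper) (indicator_mono B_upper) (indicator_mem A) (indicator_mem B)
  have inter (x : α) : A.indicator (1 : α → ℝ) x * B.indicator (1 : α → ℝ) x =
      (A ∩ B).indicator (1 : α → ℝ) x := by
    rw [inter_indicator_one, Pi.mul_apply]
  simpa only [inter, integral_indicator_one, hA, hB, hA.inter hB] using this

lemma pow_le_measureReal_iInter [Preorder α] {μ : Measure α} [IsProbabilityMeasure μ]
    (hμ : PositivelyAssociated μ) {A : ℕ → Set α} (hA : ∀ k, MeasurableSet (A k))
    (A_upper : ∀ k, IsUpperSet (A k)) {p : ℝ} (hp : 0 ≤ p) {K : ℕ}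
    (hpA : ∀ k < K, p ≤ μ.real (A k)) : p ^ K ≤ μ.real (⋂ k < K, A k) := by
  induction K with
  | zero => simp
  | succ K ih =>
    have inter : ⋂ k < K + 1, A k = (⋂ k < K, A k) ∩ A K := biInter_lt_succ A K
    rw [inter, pow_succ]
    calc p ^ K * p ≤ μ.real (⋂ k < K, A k) * μ.real (A K) :=
        mul_le_mul (ih fun k hk => hpA k (by lia)) (hpA K (by lia)) hp measureReal_nonneg
      _ ≤ μ.real ((⋂ k < K, A k) ∩ A K) := hμ.mul_measureReal_le_inter
        (.biInter (to_countable _) fun k _ => hA k) (hA K)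
        (isUpperSet_iInter₂ fun k _ => A_upper k) (A_upper K)

end PositivelyAssociated

end PositiveAssociation

section Clipping

lemma map_min_eq_restrict_add_dirac (ρ : Measure ℝ) (c : ℝ) :
    ρ.map (min · c) = ρ.restrict (Iio c) + ρ (Ici c) • Measure.dirac c := by
  have left : (ρ.restrict (Iio c)).map (min · c) = ρ.restrict (Iio c) := by
    conv_rhs => rw [← Measure.map_id (μ := ρ.restrict (Iio c))]
    refine Measure.map_congr ?_
    filter_upwards [ae_restrict_mem measurableSet_Iio] with x hx using min_eq_left hx.le
  have right : (ρ.restrict (Ici c)).map (min · c) = ρ (Ici c) • Measure.dirac c := by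
    rw [← Measure.restrict_apply_univ (Ici c), ← Measure.map_const]
    refine Measure.map_congr ?_
    filter_upwards [ae_restrict_mem measurableSet_Ici] with x hx using min_eq_right hx
  rw [← left, ← right, ← Measure.map_add _ _ (by fun_prop), ← compl_Iio,
    Measure.restrict_add_restrict_compl measurableSet_Iio]

/-- If `ν = l • μ` below `c`, this is the density with respect to `μ` of a measure that agrees
with `ν` as far as the clipped variable `min x c` can tell. -/
noncomputable def clippedDensity (μ ν : Measure ℝ) (l : ENNReal) (c x : ℝ) : ENNReal :=
  if x < c then l else ν (Ici c) / μ (Ici c)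

lemma measurable_clippedDensity (μ ν : Measure ℝ) (l : ENNReal) (c : ℝ) :
    Measurable (clippedDensity μ ν l c) :=
  Measurable.ite measurableSet_Iio measurable_const measurable_const

variable {μ ν : Measure ℝ} {l : ENNReal} {c : ℝ}

lemma map_min_withDensity_clippedDensity (hν : ν.restrict (Iio c) = l • μ.restrict (Iio c))
    (hμ₀ : μ (Ici c) ≠ 0) (hμ : μ (Ici c) ≠ ⊤) :
    (μ.withDensity (clippedDensity μ ν l c)).map (min · c) = ν.map (min · c) := by
  have below : (μ.withDensity (clippedDensity μ ν l c)).restrict (Iio c) = ν.restrict (Iio c) := by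
    rw [restrict_withDensity measurableSet_Iio, hν, ← withDensity_const]
    refine withDensity_congr_ae ?_
    filter_upwards [ae_restrict_mem measurableSet_Iio] with x hx using if_pos hx
  have above : μ.withDensity (clippedDensity μ ν l c) (Ici c) = ν (Ici c) := by
    rw [withDensity_apply _ measurableSet_Ici, setLIntegral_congr_fun measurableSet_Ici
      (f := clippedDensity μ ν l c) (g := fun _ => ν (Ici c) / μ (Ici c))
      fun x hx => if_neg (not_lt.2 hx), setLIntegral_const, ENNReal.div_mul_cancel hμ₀ hμ]
  rw [map_min_eq_restrict_add_dirac, below, above, ← map_min_eq_restrict_add_dirac]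

variable {ι : Type*} [Fintype ι]

lemma pi_withDensity {X : ι → Type*} [∀ j, MeasurableSpace (X j)] (μ : ∀ j, Measure (X j))
    [∀ j, IsProbabilityMeasure (μ j)] {f : ∀ j, X j → ENNReal} (hf : ∀ j, Measurable (f j))
    [∀ j, SigmaFinite ((μ j).withDensity (f j))] :
    Measure.pi (fun j => (μ j).withDensity (f j)) =
      (Measure.pi μ).withDensity fun u => ∏ j, f j (u j) := by
  classical
  refine Measure.pi_eq fun s hs => ?_
  have indicator_prod (u : ∀ j, X j) : (univ.pi s).indicator (fun u => ∏ j, f j (u j)) u =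
      ∏ j, (s j).indicator (f j) (u j) := by
    by_cases hu : u ∈ univ.pi s
    · rw [indicator_of_mem hu]
      exact Finset.prod_congr rfl fun j _ => (indicator_of_mem (hu j (mem_univ j)) _).symm
    · obtain ⟨j, hj⟩ := not_forall.1 (mt mem_univ_pi.2 hu)
      rw [indicator_of_notMem hu, Finset.prod_eq_zero (Finset.mem_univ j)]
      exact indicator_of_notMem hj _
  have measurable_factor (j : ι) : Measurable ((s j).indicator (f j)) := (hf j).indicator (hs j)
  rw [withDensity_apply _ (.univ_pi hs), ← lintegral_indicator (.univ_pi hs)]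
  simp_rw [indicator_prod]
  rw [ProbabilityTheory.lintegral_prod_eq_prod_lintegral_of_indepFun Finset.univ _
    (ProbabilityTheory.iIndepFun_pi fun j => (measurable_factor j).aemeasurable)
    fun j => (measurable_factor j).comp (measurable_pi_apply j)]
  refine Finset.prod_congr rfl fun j _ => ?_
  rw [withDensity_apply _ (hs j), ← lintegral_indicator (hs j)]
  exact (measurePreserving_eval μ j).lintegral_comp (measurable_factor j)

lemma prod_clippedDensity (μ ν : Measure ℝ) (l : ENNReal) (c : ℝ) (u : ι → ℝ) :
    ∏ j, clippedDensity μ ν l c (u j) =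
      l ^ countBelow u c * (ν (Ici c) / μ (Ici c)) ^ (Fintype.card ι - countBelow u c) := by
  classical
  simp only [clippedDensity, Finset.prod_ite, Finset.prod_const, countBelow]
  rw [Finset.filter_not, ← Finset.compl_eq_univ_sdiff, Finset.card_compl]

lemma pi_apply_eq_setLIntegral_of_clip_mem_iff [IsProbabilityMeasure μ] [IsProbabilityMeasure ν]
    (hν : ν.restrict (Iio c) = l • μ.restrict (Iio c)) (hμ : μ (Ici c) ≠ 0) {T : Set (ι → ℝ)}
    (hT : MeasurableSet T) (T_clip : ∀ u, (fun j => min (u j) c) ∈ T ↔ u ∈ T) :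
    Measure.pi (fun _ => ν) T = ∫⁻ u in T, l ^ countBelow u c *
      (ν (Ici c) / μ (Ici c)) ^ (Fintype.card ι - countBelow u c) ∂Measure.pi fun _ => μ := by
  set μ' := μ.withDensity (clippedDensity μ ν l c) with hμ'
  have map_eq : μ'.map (min · c) = ν.map (min · c) :=
    map_min_withDensity_clippedDensity hν hμ (measure_ne_top _ _)
  have measurable_clip : Measurable fun x : ℝ => min x c := by fun_prop
  have : IsProbabilityMeasure (ν.map (min · c)) :=
    Measure.isProbabilityMeasure_map measurable_clip.aemeasurable
  have : IsProbabilityMeasure (μ'.map (min · c)) := map_eq ▸ this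
  have : IsProbabilityMeasure μ' := Measure.isProbabilityMeasure_of_map (min · c)
  have measurable_clips : Measurable fun (u : ι → ℝ) j => min (u j) c := by fun_prop
  have preimage : (fun (u : ι → ℝ) j => min (u j) c) ⁻¹' T = T := ext T_clip
  calc Measure.pi (fun _ => ν) T
    _ = (Measure.pi fun _ => ν.map (min · c)) T := by
      rw [← Measure.pi_map_pi fun _ => measurable_clip.aemeasurable,
        Measure.map_apply measurable_clips hT, preimage]
    _ = (Measure.pi fun _ => μ') T := by
      rw [← map_eq, ← Measure.pi_map_pi fun _ => measurable_clip.aemeasurable,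
        Measure.map_apply measurable_clips hT, preimage]
    _ = ∫⁻ u in T, ∏ j, clippedDensity μ ν l c (u j) ∂Measure.pi fun _ => μ := by
      rw [hμ', pi_withDensity (fun _ => μ) fun _ => measurable_clippedDensity μ ν l c,
        withDensity_apply _ hT]
    _ = _ := by simp_rw [prod_clippedDensity]

end Clipping

section DilatedUniform

/-- The uniform law on `[0, 1 / (1 + θ)]`. -/
noncomputable def dilatedUniform (θ : ℝ) : Measure ℝ :=
  ENNReal.ofReal (1 + θ) • volume.restrict (Icc 0 (1 + θ)⁻¹)

variable {ι : Type*} [Fintype ι] {c θ : ℝ}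

lemma isProbabilityMeasure_dilatedUniform (hθ : 0 ≤ θ) :
    IsProbabilityMeasure (dilatedUniform θ) := ⟨by
  have : 0 < 1 + θ := by linarith
  simp [dilatedUniform, ← ENNReal.ofReal_mul this.le, this.ne']⟩

lemma unitUniform_Ici (hc : 0 ≤ c) : unitUniform (Ici c) = ENNReal.ofReal (1 - c) := by
  rw [unitUniform, Measure.restrict_apply measurableSet_Ici,
    show Ici c ∩ Icc 0 1 = Icc c 1 by grind, Real.volume_Icc]

lemma dilatedUniform_Ici (hθ : 0 ≤ θ) (hc : 0 ≤ c) :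
    dilatedUniform θ (Ici c) = ENNReal.ofReal (1 - (1 + θ) * c) := by
  have : 0 < 1 + θ := by linarith
  rw [dilatedUniform, Measure.smul_apply, Measure.restrict_apply measurableSet_Ici,
    show Ici c ∩ Icc 0 (1 + θ)⁻¹ = Icc c (1 + θ)⁻¹ by grind, Real.volume_Icc, smul_eq_mul,
    ← ENNReal.ofReal_mul this.le, mul_sub, mul_inv_cancel₀ this.ne']

lemma dilatedUniform_restrict_Iio (hθ : 0 ≤ θ) (hc : 0 ≤ c) (hθc : (1 + θ) * c ≤ 1) :
    (dilatedUniform θ).restrict (Iio c) =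
      ENNReal.ofReal (1 + θ) • unitUniform.restrict (Iio c) := by
  have : c ≤ (1 + θ)⁻¹ := by rwa [inv_eq_one_div, le_div_iff₀' (by linarith)]
  have : c ≤ 1 := by nlinarith
  rw [dilatedUniform, unitUniform, Measure.restrict_smul,
    Measure.restrict_restrict measurableSet_Iio, Measure.restrict_restrict measurableSet_Iio,
    show Iio c ∩ Icc 0 (1 + θ)⁻¹ = Ico 0 c by grind, show Iio c ∩ Icc 0 1 = Ico 0 c by grind]

lemma dilationLikelihood_mul_pi_unitUniform_le {a b : ℕ} (hn : Fintype.card ι = a + b + 1)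
    (hb : 0 < b) (hc : c ∈ Ioo (0 : ℝ) 1) (hθ : 0 ≤ θ) {T : Set (ι → ℝ)} (hT : MeasurableSet T)
    (T_clip : ∀ u, (fun j => min (u j) c) ∈ T ↔ u ∈ T)
    (T_count : ∀ u ∈ T, a + 1 ≤ countBelow u c) :
    dilationLikelihood a b c θ * (Measure.pi fun _ : ι => unitUniform).real T ≤
      (Measure.pi fun _ : ι => dilatedUniform θ).real T := by
  have := isProbabilityMeasure_dilatedUniform hθ
  have hc₁ : 0 < 1 - c := sub_pos.2 hc.2
  obtain hθc | hθc := le_or_gt 1 ((1 + θ) * c)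
  · rw [dilationLikelihood, max_eq_left (by linarith)]
    simp [hb.ne']
  set q := (1 - (1 + θ) * c) / (1 - c) with hq
  have q_nonneg : 0 ≤ q := div_nonneg (by linarith) hc₁.le
  have q_le_one : q ≤ 1 := div_le_one_of_le₀ (by nlinarith [hc.1]) hc₁.le
  have likelihood_eq : dilationLikelihood a b c θ = (1 + θ) ^ (a + 1) * q ^ b := by
    rw [dilationLikelihood, max_eq_right (by linarith)]
  have ratio : dilatedUniform θ (Ici c) / unitUniform (Ici c) = ENNReal.ofReal q := by
    rw [dilatedUniform_Ici hθ hc.1.le, unitUniform_Ici hc.1.le, hq, ENNReal.ofReal_div_of_pos hc₁]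
  have mass_ne_zero : unitUniform (Ici c) ≠ 0 := by simp [unitUniform_Ici hc.1.le, hc.2]
  refine (ENNReal.ofReal_le_iff_le_toReal (measure_ne_top _ _)).1 ?_
  rw [ENNReal.ofReal_mul (dilationLikelihood_nonneg a b hc.2 hθ), ofReal_measureReal,
    pi_apply_eq_setLIntegral_of_clip_mem_iff (dilatedUniform_restrict_Iio hθ hc.1.le hθc.le)
      mass_ne_zero hT T_clip, ratio, ← setLIntegral_const]
  refine setLIntegral_mono' hT fun u hu => ?_
  have count_le := T_count u hu
  rw [likelihood_eq, ← ENNReal.ofReal_pow (by linarith), ← ENNReal.ofReal_pow q_nonneg,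
    ← ENNReal.ofReal_mul (by positivity)]
  gcongr ENNReal.ofReal (?_ * ?_)
  · exact pow_le_pow_right₀ (by linarith) count_le
  · exact pow_le_pow_of_le_one q_nonneg q_le_one (by lia)

end DilatedUniform

section FirstCrossing

variable {n : ℕ} {B : Finset ℕ} {c : ℕ → ℝ}

/-- The event that `i` is the first index of `B` to be crossed, where `j` is crossed by `u` if more
than `j` coordinates of `u` are below `c j`. -/
def firstCrossing (n : ℕ) (B : Finset ℕ) (c : ℕ → ℝ) (i : ℕ) : Set (Fin n → ℝ) :=
  {u | i + 1 ≤ countBelow u (c i) ∧ ∀ j ∈ B, j < i → countBelow u (c j) ≤ j}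

lemma measurableSet_firstCrossing (n : ℕ) (B : Finset ℕ) (c : ℕ → ℝ) (i : ℕ) :
    MeasurableSet (firstCrossing n B c i) := by
  have : firstCrossing n B c i = {u | i + 1 ≤ countBelow u (c i)} ∩
      ⋂ j ∈ B.filter (· < i), {u | countBelow u (c j) ≤ j} := by
    ext u
    simp [firstCrossing]
  rw [this]
  exact (measurableSet_le measurable_const (measurable_countBelow _)).inter <|
    Finset.measurableSet_biInter _ fun j _ => measurableSet_countBelow_le (c j) j

lemma pairwiseDisjoint_firstCrossing (n : ℕ) (B : Finset ℕ) (c : ℕ → ℝ) :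
    (B : Set ℕ).PairwiseDisjoint (firstCrossing n B c) := by
  have disjoint_of_lt {i j : ℕ} (hi : i ∈ B) (hij : i < j) :
      Disjoint (firstCrossing n B c i) (firstCrossing n B c j) :=
    Set.disjoint_left.2 fun u hui huj => by
      have := hui.1
      have := huj.2 i hi hij
      lia
  intro i hi j hj hij
  rcases hij.lt_or_gt with hlt | hgt
  · exact disjoint_of_lt hi hlt
  · exact (disjoint_of_lt hj hgt).symm

lemma exists_crossing_subset_iUnion_firstCrossing (n : ℕ) (B : Finset ℕ) (c : ℕ → ℝ) :
    {u : Fin n → ℝ | ∃ i ∈ B, i + 1 ≤ countBelow u (c i)} ⊆ ⋃ i ∈ B, firstCrossing n B c i := by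
  classical
  intro u hu
  obtain ⟨hB, hcross⟩ := Nat.find_spec hu
  refine mem_iUnion₂.2 ⟨Nat.find hu, hB, hcross, fun j hj hlt => ?_⟩
  have := Nat.find_min hu hlt
  grind

lemma countBelow_clip {ι : Type*} [Fintype ι] (u : ι → ℝ) {c d : ℝ} (hcd : c ≤ d) :
    countBelow (fun j => min (u j) d) c = countBelow u c := by
  simp [countBelow, not_lt.2 hcd]

lemma clip_mem_firstCrossing_iff (hc : MonotoneOn c B) {i : ℕ} (hi : i ∈ B) (u : Fin n → ℝ) :
    (fun j => min (u j) (c i)) ∈ firstCrossing n B c i ↔ u ∈ firstCrossing n B c i := by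
  simp only [firstCrossing, mem_ofPred_eq, countBelow_clip u le_rfl]
  refine and_congr_right fun _ => forall₃_congr fun j hj hji => ?_
  rw [countBelow_clip u (hc hj hi hji.le)]

lemma sum_dilationLikelihood_mul_firstCrossing_le_one (hB : ∀ i ∈ B, i + 1 < n)
    (hc : MonotoneOn c B) (hc₀₁ : ∀ i ∈ B, c i ∈ Ioo (0 : ℝ) 1) {θ : ℝ} (hθ : 0 ≤ θ) :
    ∑ i ∈ B, dilationLikelihood i (n - 1 - i) (c i) θ *
      (Measure.pi fun _ => unitUniform).real (firstCrossing n B c i) ≤ 1 := by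
  have := isProbabilityMeasure_dilatedUniform hθ
  calc ∑ i ∈ B, dilationLikelihood i (n - 1 - i) (c i) θ *
        (Measure.pi fun _ => unitUniform).real (firstCrossing n B c i)
    _ ≤ ∑ i ∈ B, (Measure.pi fun _ => dilatedUniform θ).real (firstCrossing n B c i) := by
      refine Finset.sum_le_sum fun i hi => ?_
      have := hB i hi
      exact dilationLikelihood_mul_pi_unitUniform_le (by rw [Fintype.card_fin]; lia) (by lia)
        (hc₀₁ i hi) hθ (measurableSet_firstCrossing n B c i)
        (clip_mem_firstCrossing_iff hc hi) fun u hu => hu.1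
    _ = (Measure.pi fun _ => dilatedUniform θ).real (⋃ i ∈ B, firstCrossing n B c i) :=
      (measureReal_biUnion_finset (pairwiseDisjoint_firstCrossing n B c)
        fun i _ => measurableSet_firstCrossing n B c i).symm
    _ ≤ 1 := measureReal_le_one

lemma mul_measureReal_exists_crossing_le_log (hB : ∀ i ∈ B, i + 1 < n) (hc : MonotoneOn c B)
    (hc₀₁ : ∀ i ∈ B, c i ∈ Ioo (0 : ℝ) 1) {θ₀ θ₁ M : ℝ} (hθ₀ : 0 < θ₀) (hθ : θ₀ ≤ θ₁)
    (hM : 0 ≤ M)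
    (hMB : ∀ i ∈ B, M ≤ ∫ θ in θ₀..θ₁, dilationLikelihood i (n - 1 - i) (c i) θ * θ⁻¹) :
    M * (Measure.pi fun _ => unitUniform).real
      {u : Fin n → ℝ | ∃ i ∈ B, i + 1 ≤ countBelow u (c i)} ≤ Real.log (θ₁ / θ₀) := by
  set P := (Measure.pi fun _ : Fin n => unitUniform).real
  have integrable (i : ℕ) : IntervalIntegrable
      (fun θ => dilationLikelihood i (n - 1 - i) (c i) θ * θ⁻¹ * P (firstCrossing n B c i))
      volume θ₀ θ₁ :=
    (intervalIntegrable_dilationLikelihood_mul_inv i (n - 1 - i) (c i) hθ₀ hθ).mul_const _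
  calc M * P {u | ∃ i ∈ B, i + 1 ≤ countBelow u (c i)}
    _ ≤ M * ∑ i ∈ B, P (firstCrossing n B c i) := by
      gcongr
      exact (measureReal_mono (exists_crossing_subset_iUnion_firstCrossing n B c)
        (measure_ne_top _ _)).trans
        (measureReal_biUnion_finset_le _ _)
    _ ≤ ∑ i ∈ B, (∫ θ in θ₀..θ₁, dilationLikelihood i (n - 1 - i) (c i) θ * θ⁻¹) *
          P (firstCrossing n B c i) := by
      rw [Finset.mul_sum]
      gcongr with i hi
      exact hMB i hi
    _ = ∫ θ in θ₀..θ₁, ∑ i ∈ B, dilationLikelihood i (n - 1 - i) (c i) θ * θ⁻¹ *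
          P (firstCrossing n B c i) := by
      rw [intervalIntegral.integral_finsetSum fun i _ => integrable i]
      simp_rw [intervalIntegral.integral_mul_const]
    _ ≤ ∫ θ in θ₀..θ₁, θ⁻¹ := by
      refine intervalIntegral.integral_mono_on hθ
        (by simpa only [Finset.sum_fn] using IntervalIntegrable.sum B fun i _ => integrable i)
        (intervalIntegrable_inv_iff.2 (.inr (by grind [uIcc_of_le hθ]))) fun θ hθmem => ?_
      have hθpos : 0 < θ := hθ₀.trans_le hθmem.1
      simp_rw [mul_right_comm _ θ⁻¹, ← Finset.sum_mul]
      exact mul_le_of_le_one_left (inv_nonneg.2 hθpos.le)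
        (sum_dilationLikelihood_mul_firstCrossing_le_one hB hc hc₀₁ hθpos.le)
    _ = Real.log (θ₁ / θ₀) := integral_inv_of_pos hθ₀ (hθ₀.trans_le hθ)

end FirstCrossing

section QuantileLevels

/-- `c i` is the `δ`-quantile of the law Beta(i+1, n-i) of the `i`-th order statistic, for all
`i < n`. The index `i` is 0-based. -/
def IsBetaQuantile (n : ℕ) (δ : ℝ) (c : ℕ → ℝ) : Prop :=
  ∀ i < n, c i ∈ Ioo (0 : ℝ) 1 ∧ binomialTail n (i + 1) (c i) = δ

variable {n : ℕ} {δ : ℝ} {c : ℕ → ℝ}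

lemma exists_isBetaQuantile (n : ℕ) (hδ : δ ∈ Ioo (0 : ℝ) 1) : ∃ c, IsBetaQuantile n δ c := by
  choose c hc using fun (i : ℕ) (hi : i < n) => exists_binomialTail_eq (Nat.succ_le_of_lt hi) hδ
  exact ⟨fun i => if hi : i < n then c i hi else 0, fun i hi => by
    simpa only [hi, dite_true] using hc i hi⟩

namespace IsBetaQuantile

lemma binomialTail_eq (hc : IsBetaQuantile n δ c) {i : ℕ} (hi : i < n) :
    binomialTail (i + (n - 1 - i) + 1) (i + 1) (c i) = δ := by
  rw [show i + (n - 1 - i) + 1 = n by lia]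
  exact (hc i hi).2

lemma monotoneOn (hc : IsBetaQuantile n δ c) : MonotoneOn c (Iio n) := by
  intro i hi j hj hij
  have hci := Ioo_subset_Icc_self (hc i hi).1
  rw [← (strictMonoOn_binomialTail j (n - 1 - j)).le_iff_le hci
    (Ioo_subset_Icc_self (hc j hj).1), hc.binomialTail_eq hj, ← (hc i hi).2,
    show j + (n - 1 - j) + 1 = n by grind]
  exact binomialTail_anti n (by lia) hci

lemma le_MnPlus (hc : IsBetaQuantile n δ c) (hn : 0 < n) {u : Fin n → ℝ}
    (hu : ∀ j, u j ∈ Icc (0 : ℝ) 1) (hcount : ∀ i < n, countBelow u (c i) ≤ i) :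
    δ ≤ MnPlus u := by
  have : Nonempty (Fin n) := ⟨⟨0, hn⟩⟩
  refine le_ciInf fun i => ?_
  have horder : orderStat u i ∈ Icc (0 : ℝ) 1 := hu _
  have hcast : (n : ℝ) - (i : ℕ) = (n - 1 - i : ℕ) + 1 := by
    rw [Nat.sub_sub, Nat.cast_sub (by lia)]; push_cast; ring
  rw [pOrd, hcast, regIncBeta_eq_binomialTail _ _ horder.1, ← hc.binomialTail_eq i.2]
  exact (strictMonoOn_binomialTail i (n - 1 - i)).monotoneOn
    (Ioo_subset_Icc_self (hc i i.2).1) horder (le_orderStat_of_countBelow_le (hcount i i.2))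

lemma measureReal_le_countBelow_eq (hc : IsBetaQuantile n δ c) {i : ℕ} (hi : i < n) :
    (nullMeasure n).real {u | i + 1 ≤ countBelow u (c i)} = δ := by
  rw [← (hc i hi).2]
  refine (measureReal_le_countBelow unitUniform _ _).trans ?_
  rw [Fintype.card_fin, unitUniform_real_Iio (Ioo_subset_Icc_self (hc i hi).1)]

end IsBetaQuantile

end QuantileLevels

section BulkBlocks

/-- The standard deviation of the normal approximation of `Beta(a + 1, b + 1)` relative to its
center. -/
noncomputable def betaRelStd (a b : ℕ) : ℝ := betaStd a b / betaCenter a b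

lemma betaRelStd_sq (a : ℕ) {b : ℕ} (hb : 0 < b) :
    betaRelStd a b ^ 2 = b / ((a + 1) * (a + b + 1)) := by
  rw [betaRelStd, div_pow, betaStd_sq a hb, betaVar, one_sub_betaCenter, betaCenter]
  field_simp

lemma inv_le_betaRelStd (a : ℕ) {b : ℕ} (hb : 0 < b) :
    ((a + b + 1 : ℕ) : ℝ)⁻¹ ≤ betaRelStd a b := by
  have hb' : (1 : ℝ) ≤ b := by exact_mod_cast hb
  refine le_of_sq_le_sq ?_ (div_nonneg (Real.sqrt_nonneg _) (betaCenter_pos a b).le)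
  rw [betaRelStd_sq a hb, inv_pow, ← one_div, div_le_div_iff₀ (by positivity) (by positivity)]
  push_cast
  nlinarith [(a.cast_nonneg : (0 : ℝ) ≤ a)]

lemma betaRelStd_le_one (a : ℕ) {b : ℕ} (hb : 0 < b) : betaRelStd a b ≤ 1 := by
  refine le_of_sq_le_sq ?_ zero_le_one
  rw [betaRelStd_sq a hb, one_pow, div_le_one (by positivity)]
  nlinarith [(a.cast_nonneg : (0 : ℝ) ≤ a), (b.cast_nonneg : (0 : ℝ) ≤ b)]

lemma mul_betaStd_le (a : ℕ) {b : ℕ} (hb : 0 < b) {L : ℝ} (ha : 2 * L ^ 2 ≤ a + 1)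
    (hLb : 2 * L ^ 2 ≤ b) : L * betaStd a b ≤ betaCenter a b * (1 - betaCenter a b) := by
  have hm := betaCenter_pos a b
  have hm' := sub_pos.2 (betaCenter_lt_one a hb)
  refine le_of_sq_le_sq ?_ (mul_pos hm hm').le
  have hb' : (0 : ℝ) < b := by exact_mod_cast hb
  rw [mul_pow, betaStd_sq a hb, betaVar, one_sub_betaCenter, betaCenter]
  field_simp
  nlinarith [mul_le_mul_of_nonneg_right ha hb'.le,
    mul_le_mul_of_nonneg_right hLb (show (0 : ℝ) ≤ a + 1 by positivity)]

/-- The indices `i` with `i + 1 < n` whose quantiles lie in the Gaussian range, at depth `L`, and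
whose relative standard deviation lies in `[s, s * R]`. -/
noncomputable def bulkBlock (n : ℕ) (L s R : ℝ) : Finset ℕ :=
  open Classical in
  {i ∈ Finset.range n | i + 1 < n ∧
    L * betaStd i (n - 1 - i) ≤ betaCenter i (n - 1 - i) * (1 - betaCenter i (n - 1 - i)) ∧
    betaRelStd i (n - 1 - i) ∈ Icc s (s * R)}

lemma mem_bulkBlock {n i : ℕ} {L s R : ℝ} : i ∈ bulkBlock n L s R ↔ i + 1 < n ∧
    L * betaStd i (n - 1 - i) ≤ betaCenter i (n - 1 - i) * (1 - betaCenter i (n - 1 - i)) ∧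
    betaRelStd i (n - 1 - i) ∈ Icc s (s * R) := by
  rw [bulkBlock, Finset.mem_filter, Finset.mem_range]
  exact ⟨And.right, fun h => ⟨by lia, h⟩⟩

lemma LevelRegime.measureReal_exists_crossing_le {κ L δ s R : ℝ} (h : LevelRegime κ L δ) {n : ℕ}
    {c : ℕ → ℝ} (hc : IsBetaQuantile n δ c) (hs : 0 < s) (hR : 1 ≤ R) :
    (nullMeasure n).real {u | ∃ i ∈ bulkBlock n L s R, i + 1 ≤ countBelow u (c i)} ≤
      (Real.log (6 * √L) + Real.log R) *
        ((1 + κ) ^ 2 * (2 + 4 * κ) * L * δ / (1 - κ) ^ 3) := by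
  have hκ := h.κ_pos
  have hκ' : 0 < 1 - κ := by linarith [h.κ_lt]
  have hL := h.L_pos
  have hδ := h.δ_pos
  have hsL : 1 ≤ √L := by
    refine Real.one_le_sqrt.2 (le_trans ?_ h.le_L)
    linarith [h.two_le_depth, show 16 / κ ^ 3 = 4 * (4 / κ ^ 3) by ring]
  have hlt : ∀ i ∈ bulkBlock n L s R, i < n := fun i hi => by have := (mem_bulkBlock.1 hi).1; lia
  have hθ : s ≤ 6 * √L * (s * R) := by
    nlinarith [mul_le_mul hsL hR zero_le_one (by linarith), mul_pos hs (zero_lt_one.trans_le hR)]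
  have hblock := mul_measureReal_exists_crossing_le_log (B := bulkBlock n L s R)
    (fun i hi => (mem_bulkBlock.1 hi).1) (hc.monotoneOn.mono hlt) (fun i hi => (hc i (hlt i hi)).1)
    hs hθ (M := (1 - κ) ^ 3 / ((1 + κ) ^ 2 * (2 + 4 * κ) * L * δ)) (by positivity) fun i hi => by
      obtain ⟨hin, hbulk, hrel⟩ := mem_bulkBlock.1 hi
      exact h.le_integral_dilationLikelihood (by lia) hbulk (hc i (hlt i hi)).1
        (hc.binomialTail_eq (hlt i hi)) hs hrel.1
        (mul_le_mul_of_nonneg_left hrel.2 (by positivity))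
  rw [show 6 * √L * (s * R) / s = 6 * √L * R by field_simp,
    Real.log_mul (by positivity) (by positivity)] at hblock
  rw [mul_div_assoc', le_div_iff₀ (by positivity)]
  rw [div_mul_eq_mul_div, div_le_iff₀ (by positivity), mul_comm] at hblock
  exact hblock

lemma exists_mem_Icc_rpow {n s : ℝ} (hn : 0 < n) {K : ℕ} (hK : 0 < K) (hs : n⁻¹ ≤ s)
    (hs₁ : s ≤ 1) :
    ∃ k < K, s ∈ Icc (n ^ (-((k : ℝ) + 1) / K)) (n ^ (-((k : ℝ) + 1) / K) * n ^ (1 / (K : ℝ))) := by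
  classical
  have hlast : n ^ (-(((K - 1 : ℕ) : ℝ) + 1) / K) ≤ s := by
    rwa [Nat.cast_pred hK, sub_add_cancel, neg_div, div_self (by positivity), Real.rpow_neg_one]
  have hex : ∃ k : ℕ, n ^ (-((k : ℝ) + 1) / K) ≤ s := ⟨K - 1, hlast⟩
  refine ⟨Nat.find hex, by have := Nat.find_min' hex hlast; lia, Nat.find_spec hex, ?_⟩
  rw [← Real.rpow_add hn, ← add_div, neg_add, neg_add_cancel_right]
  rcases hk : Nat.find hex with _ | k
  · simpa only [Nat.cast_zero, neg_zero, zero_div, Real.rpow_zero] using hs₁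
  · have := Nat.find_min hex (m := k) (by lia)
    push_cast
    exact (not_le.1 this).le

lemma exists_mem_bulkBlock {n i K : ℕ} {L : ℝ} (hK : 0 < K) (hi : i + 1 < n)
    (hLi : 2 * L ^ 2 ≤ i + 1) (hLn : 2 * L ^ 2 ≤ (n - 1 - i : ℕ)) :
    ∃ k < K, i ∈ bulkBlock n L ((n : ℝ) ^ (-((k : ℝ) + 1) / K)) ((n : ℝ) ^ (1 / (K : ℝ))) := by
  have hb : 0 < n - 1 - i := by lia
  have hinv := inv_le_betaRelStd i hb
  rw [show i + (n - 1 - i) + 1 = n by lia] at hinv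
  obtain ⟨k, hk, hmem⟩ := exists_mem_Icc_rpow (by exact_mod_cast (by lia : 0 < n)) hK hinv
    (betaRelStd_le_one i hb)
  exact ⟨k, hk, mem_bulkBlock.2 ⟨hi, mul_betaStd_le i hb hLi hLn, hmem⟩⟩

end BulkBlocks

section FiniteSample

instance isProbabilityMeasure_nullMeasure (n : ℕ) : IsProbabilityMeasure (nullMeasure n) :=
  inferInstanceAs (IsProbabilityMeasure (Measure.pi fun _ => unitUniform))

/-- The samples for which the levels `c i`, `i ∈ B`, lie at or below the order statistics with
(0-based) index `i`. -/
def noCrossing (n : ℕ) (B : Finset ℕ) (c : ℕ → ℝ) : Set (Fin n → ℝ) :=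
  {u | ∀ i ∈ B, countBelow u (c i) ≤ i}

lemma measurableSet_noCrossing (n : ℕ) (B : Finset ℕ) (c : ℕ → ℝ) :
    MeasurableSet (noCrossing n B c) := by
  simp only [noCrossing, ofPred_forall]
  exact B.measurableSet_biInter fun i _ => measurableSet_countBelow_le (c i) i

lemma isUpperSet_noCrossing (n : ℕ) (B : Finset ℕ) (c : ℕ → ℝ) : IsUpperSet (noCrossing n B c) :=
  fun _ _ huv hu i hi => (countBelow_anti huv (c i)).trans (hu i hi)

lemma compl_noCrossing (n : ℕ) (B : Finset ℕ) (c : ℕ → ℝ) :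
    (noCrossing n B c)ᶜ = {u | ∃ i ∈ B, i + 1 ≤ countBelow u (c i)} := by
  ext u
  simp only [noCrossing, mem_compl_iff, Set.mem_ofPred_eq, not_forall, not_le,
    Nat.succ_le_iff, exists_prop]

/-- The indices of the `N` smallest and of the `N` largest order statistics. -/
def edgeIndices (n N : ℕ) : Finset ℕ := {i ∈ Finset.range n | i < N ∨ n - 1 - i < N}

lemma card_edgeIndices_le (n N : ℕ) : (edgeIndices n N).card ≤ 2 * N := by
  have hsub : edgeIndices n N ⊆
      Finset.range N ∪ (Finset.range N).image fun j => n - 1 - j := fun i hi => by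
    simp only [edgeIndices, Finset.mem_filter, Finset.mem_range] at hi
    simp only [Finset.mem_union, Finset.mem_range, Finset.mem_image]
    exact hi.2.imp_right fun h => ⟨n - 1 - i, h, by lia⟩
  calc (edgeIndices n N).card
    _ ≤ (Finset.range N).card + ((Finset.range N).image fun j => n - 1 - j).card :=
      (Finset.card_le_card hsub).trans (Finset.card_union_le _ _)
    _ ≤ N + N := add_le_add (Finset.card_range N).le
      (Finset.card_image_le.trans (Finset.card_range N).le)
    _ = 2 * N := (two_mul N).symm

variable {n K : ℕ} {κ L δ p : ℝ} {c : ℕ → ℝ}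

lemma IsBetaQuantile.measureReal_compl_noCrossing_edgeIndices_le (hc : IsBetaQuantile n δ c)
    (hδ : 0 ≤ δ) (L : ℝ) :
    (nullMeasure n).real (noCrossing n (edgeIndices n ⌈2 * L ^ 2⌉₊) c)ᶜ ≤ (4 * L ^ 2 + 2) * δ := by
  set X := edgeIndices n ⌈2 * L ^ 2⌉₊
  have hX : (X.card : ℝ) ≤ 4 * L ^ 2 + 2 := by
    have hceil := Nat.ceil_lt_add_one (show 0 ≤ 2 * L ^ 2 by positivity)
    have hcard : (X.card : ℝ) ≤ 2 * ⌈2 * L ^ 2⌉₊ := by exact_mod_cast card_edgeIndices_le n _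
    linarith
  calc (nullMeasure n).real (noCrossing n X c)ᶜ
    _ = (nullMeasure n).real (⋃ i ∈ X, {u | i + 1 ≤ countBelow u (c i)}) := by
      simp only [compl_noCrossing, ← exists_prop, ofPred_exists]
    _ ≤ ∑ i ∈ X, (nullMeasure n).real {u | i + 1 ≤ countBelow u (c i)} :=
      measureReal_biUnion_finset_le _ _
    _ = X.card * δ := by
      rw [← nsmul_eq_mul]
      exact Finset.sum_eq_card_nsmul fun i hi => hc.measureReal_le_countBelow_eq
        (Finset.mem_range.1 (Finset.mem_filter.1 hi).1)
    _ ≤ (4 * L ^ 2 + 2) * δ := by gcongr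

lemma ae_mem_Icc_nullMeasure (n : ℕ) : ∀ᵐ u ∂nullMeasure n, ∀ j, u j ∈ Icc (0 : ℝ) 1 :=
  Measure.ae_pi_le_pi <| Filter.eventually_pi fun _ => ae_restrict_mem measurableSet_Icc

lemma mem_edgeIndices_or_exists_mem_bulkBlock (hK : 0 < K) (hL : 0 < L) {i : ℕ} (hi : i < n) :
    i ∈ edgeIndices n ⌈2 * L ^ 2⌉₊ ∨ ∃ k < K, i ∈
      bulkBlock n L ((n : ℝ) ^ (-((k : ℝ) + 1) / K)) ((n : ℝ) ^ (1 / (K : ℝ))) := by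
  refine or_iff_not_imp_left.2 fun hedge => ?_
  have hN : 0 < ⌈2 * L ^ 2⌉₊ := Nat.ceil_pos.2 (by positivity)
  have hmem : ⌈2 * L ^ 2⌉₊ ≤ i ∧ ⌈2 * L ^ 2⌉₊ ≤ n - 1 - i := by
    simpa only [edgeIndices, Finset.mem_filter, Finset.mem_range, hi, true_and, not_or,
      not_lt] using hedge
  exact exists_mem_bulkBlock hK (by lia) (by linarith [Nat.ceil_le.1 hmem.1])
    (Nat.ceil_le.1 hmem.2)

lemma IsBetaQuantile.ae_iInter_noCrossing_subset (hc : IsBetaQuantile n δ c) (hn : 0 < n)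
    (hK : 0 < K) (hL : 0 < L) :
    (⋂ k < K, noCrossing n
      (bulkBlock n L ((n : ℝ) ^ (-((k : ℝ) + 1) / K)) ((n : ℝ) ^ (1 / (K : ℝ)))) c)
      ≤ᵐ[nullMeasure n] ({u | δ ≤ MnPlus u} ∪ (noCrossing n (edgeIndices n ⌈2 * L ^ 2⌉₊) c)ᶜ :
        Set (Fin n → ℝ)) := by
  filter_upwards [ae_mem_Icc_nullMeasure n] with u hu hblocks
  refine or_iff_not_imp_right.2 fun hedge => hc.le_MnPlus hn hu fun i hi => ?_
  rcases mem_edgeIndices_or_exists_mem_bulkBlock hK hL hi with hmem | ⟨k, hk, hmem⟩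
  · exact not_not.1 hedge i hmem
  · exact mem_iInter₂.1 hblocks k hk i hmem

lemma LevelRegime.δ_lt_one (h : LevelRegime κ L δ) : δ < 1 := by
  have hz := h.two_le_depth
  refine h.δ_lt.trans_le ((div_le_one (by positivity)).2 ?_)
  exact (Real.exp_le_one_iff.2 (neg_nonpos.2 (by positivity))).trans (by linarith)

theorem LevelRegime.pow_sub_le_measureReal_MnPlus (h : LevelRegime κ L δ) (hn : 0 < n) (hK : 0 < K)
    (hp : p ≤ 1) (hblock : (Real.log (6 * √L) + Real.log n / K) *
      ((1 + κ) ^ 2 * (2 + 4 * κ) * L * δ / (1 - κ) ^ 3) ≤ p) :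
    (1 - p) ^ K - (4 * L ^ 2 + 2) * δ ≤ (nullMeasure n).real {u | δ ≤ MnPlus u} := by
  obtain ⟨c, hc⟩ := exists_isBetaQuantile n ⟨h.δ_pos, h.δ_lt_one⟩
  have hn' : (0 : ℝ) < n := by exact_mod_cast hn
  set R : ℝ := (n : ℝ) ^ (1 / (K : ℝ)) with hR
  set s : ℕ → ℝ := fun k => (n : ℝ) ^ (-((k : ℝ) + 1) / K)
  have hlogR : Real.log R = Real.log n / K := by rw [hR, Real.log_rpow hn', one_div_mul_eq_div]
  have hblocks (k : ℕ) : 1 - p ≤ (nullMeasure n).real (noCrossing n (bulkBlock n L (s k) R) c) := by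
    have hcross := h.measureReal_exists_crossing_le hc (Real.rpow_pos_of_pos hn' _ : 0 < s k)
      (Real.one_le_rpow (by exact_mod_cast hn) (by positivity) : 1 ≤ R)
    rw [← compl_noCrossing, probReal_compl_eq_one_sub (measurableSet_noCrossing n _ c), hlogR]
      at hcross
    linarith
  have hharris : (1 - p) ^ K ≤
      (nullMeasure n).real (⋂ k < K, noCrossing n (bulkBlock n L (s k) R) c) :=
    (PositivelyAssociated.pi unitUniform n).pow_le_measureReal_iInter
      (fun k => measurableSet_noCrossing n _ c) (fun k => isUpperSet_noCrossing n _ c)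
      (sub_nonneg.2 hp) fun k _ => hblocks k
  have hcover := ENNReal.toReal_mono (measure_ne_top _ _)
    (measure_mono_ae (hc.ae_iInter_noCrossing_subset hn hK h.L_pos))
  have hunion := measureReal_union_le (μ := nullMeasure n) {u | δ ≤ MnPlus u}
    (noCrossing n (edgeIndices n ⌈2 * L ^ 2⌉₊) c)ᶜ
  have hedge := hc.measureReal_compl_noCrossing_edgeIndices_le h.δ_pos.le L
  exact sub_le_iff_le_add.2 (hharris.trans (hcover.trans (hunion.trans (by gcongr))))

end FiniteSample

section Asymptotics

variable {x κ : ℝ}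

/-- The factor by which the block bound exceeds its limit `x / K` when the Gaussian approximation
of the quantiles has relative precision `κ`. -/
noncomputable def inflation (κ : ℝ) : ℝ := (1 + κ) ^ 2 * (1 + 2 * κ) / (1 - κ) ^ 3

lemma tendsto_log_div_self_atTop : Tendsto (fun ℓ => Real.log ℓ / ℓ) atTop (nhds 0) :=
  Real.isLittleO_log_id_atTop.tendsto_div_nhds_zero

lemma tendsto_log_mul_sqrt_log_div_self_atTop :
    Tendsto (fun ℓ => Real.log (6 * √(Real.log ℓ)) / ℓ) atTop (nhds 0) := by
  have hloglog : Tendsto (fun ℓ => Real.log (Real.log ℓ) / ℓ) atTop (nhds 0) :=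
    ((Real.isLittleO_log_id_atTop.comp_tendsto Real.tendsto_log_atTop).trans
      Real.isLittleO_log_id_atTop).tendsto_div_nhds_zero
  have hlim := (tendsto_const_nhds (x := Real.log 6)).div_atTop tendsto_id |>.add
    (hloglog.div_const 2)
  rw [zero_div, add_zero] at hlim
  refine hlim.congr' ?_
  filter_upwards [Real.tendsto_log_atTop.eventually_gt_atTop 0] with ℓ hℓ
  rw [Real.log_mul (by norm_num) (Real.sqrt_pos.2 hℓ).ne', Real.log_sqrt hℓ.le, id]
  ring

lemma tendsto_level (x : ℝ) :
    Tendsto (fun ℓ => x / (2 * ℓ * Real.log ℓ)) atTop (nhds 0) :=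
  tendsto_const_nhds.div_atTop <|
    (tendsto_id.const_mul_atTop two_pos).atTop_mul_atTop₀ Real.tendsto_log_atTop

lemma tendsto_edgeBound (x : ℝ) :
    Tendsto (fun ℓ => (4 * Real.log ℓ ^ 2 + 2) * (x / (2 * ℓ * Real.log ℓ))) atTop (nhds 0) := by
  have hlim := (tendsto_log_div_self_atTop.const_mul (2 * x)).add ((tendsto_level x).const_mul 2)
  rw [mul_zero, mul_zero, add_zero] at hlim
  refine hlim.congr' ?_
  filter_upwards [Real.tendsto_log_atTop.eventually_gt_atTop 0, eventually_gt_atTop 0] with ℓ hL hℓ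
  field_simp
  ring

lemma tendsto_blockBound (x κ K : ℝ) :
    Tendsto (fun ℓ => (Real.log (6 * √(Real.log ℓ)) + ℓ / K) * ((1 + κ) ^ 2 * (2 + 4 * κ) *
      Real.log ℓ * (x / (2 * ℓ * Real.log ℓ)) / (1 - κ) ^ 3)) atTop
      (nhds (inflation κ * x / K)) := by
  have hlim := (tendsto_log_mul_sqrt_log_div_self_atTop.add_const (1 / K)).mul_const
    (inflation κ * x)
  rw [zero_add, one_div_mul_eq_div] at hlim
  refine hlim.congr' ?_
  filter_upwards [Real.tendsto_log_atTop.eventually_gt_atTop 0, eventually_gt_atTop 0] with ℓ hL hℓ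
  rw [inflation]
  field_simp
  ring

lemma eventually_exp_neg_log_le_level (hx : 0 < x) (hκ : κ ∈ Ioo (0 : ℝ) (1 / 2)) :
    ∀ᶠ ℓ in atTop,
      Real.exp (-((1 - κ) * (1 + 2 * κ) * Real.log ℓ)) ≤ x / (2 * ℓ * Real.log ℓ) := by
  have hη : 0 < κ * (1 - 2 * κ) := mul_pos hκ.1 (by linarith [hκ.2])
  filter_upwards [(isLittleO_log_rpow_atTop hη).bound (half_pos hx), eventually_gt_atTop 0,
    Real.tendsto_log_atTop.eventually_gt_atTop 0] with ℓ hlog hℓ hL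
  rw [Real.norm_of_nonneg hL.le, Real.norm_of_nonneg (Real.rpow_nonneg hℓ.le _),
    Real.rpow_def_of_pos hℓ] at hlog
  have hsplit : -((1 - κ) * (1 + 2 * κ) * Real.log ℓ) =
      -(Real.log ℓ * (κ * (1 - 2 * κ))) - Real.log ℓ := by ring
  rw [hsplit, Real.exp_sub, Real.exp_log hℓ, Real.exp_neg, le_div_iff₀ (by positivity)]
  have hpos := Real.exp_pos (Real.log ℓ * (κ * (1 - 2 * κ)))
  generalize Real.exp (Real.log ℓ * (κ * (1 - 2 * κ))) = E at hlog hpos ⊢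
  field_simp
  linarith

lemma eventually_levelRegime (hx : 0 < x) (hκ : κ ∈ Ioo (0 : ℝ) (1 / 2)) :
    ∀ᶠ ℓ in atTop, LevelRegime κ (Real.log ℓ) (x / (2 * ℓ * Real.log ℓ)) := by
  have hκ₀ := hκ.1
  filter_upwards [Real.tendsto_log_atTop.eventually_ge_atTop (16 / κ ^ 3), eventually_gt_atTop 0,
    Real.tendsto_log_atTop.eventually_gt_atTop 0,
    (tendsto_level x).eventually_lt_const (by positivity :
      0 < Real.exp (-(4 / 3 * (4 / κ ^ 3) * (4 / κ ^ 3 + 2))) / (96 * (4 / κ ^ 3))),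
    eventually_exp_neg_log_le_level hx hκ] with ℓ hle hℓ hL hlt hge
  exact ⟨hκ₀, hκ.2, hle, by positivity, hlt, hge⟩

lemma exists_inflation_pow_gt (x : ℝ) {ε : ℝ} (hε : 0 < ε) :
    ∃ κ ∈ Ioo (0 : ℝ) (1 / 2), ∃ K : ℕ, 0 < K ∧ inflation κ * x / K < 1 ∧
      Real.exp (-x) - ε < (1 - inflation κ * x / K) ^ K := by
  have hcont : ContinuousAt (fun κ => Real.exp (-(inflation κ * x))) 0 := by
    unfold inflation
    fun_prop (disch := norm_num)
  have hκ : ∀ᶠ κ in nhds (0 : ℝ), Real.exp (-x) - ε < Real.exp (-(inflation κ * x)) :=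
    hcont.eventually_const_lt (by norm_num [inflation, hε])
  obtain ⟨κ, hκε, hκ⟩ := ((hκ.filter_mono nhdsWithin_le_nhds).and
    (Ioo_mem_nhdsGT (by norm_num : (0 : ℝ) < 1 / 2))).exists
  have hpow : Tendsto (fun K : ℕ => (1 - inflation κ * x / K) ^ K) atTop
      (nhds (Real.exp (-(inflation κ * x)))) := by
    simpa only [neg_div, ← sub_eq_add_neg] using
      Real.tendsto_one_add_div_pow_exp (-(inflation κ * x))
  obtain ⟨K, hKε, hK, hK₀⟩ := ((hpow.eventually_const_lt hκε).and
    (((tendsto_const_div_atTop_nhds_zero_nat _).eventually_lt_const (zero_lt_one' ℝ)).and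
      (eventually_gt_atTop 0))).exists
  exact ⟨κ, hκ, K, hK₀, hK, hKε⟩

end Asymptotics

theorem berk_jones_MnPlus_null_lower_bound (x : ℝ) (hx : 0 < x) :
    ∀ ε > (0:ℝ), ∀ᶠ n : ℕ in Filter.atTop,
      Real.exp (-x) - ε ≤
        ((nullMeasure n) {u | x / (2 * Real.log n * Real.log (Real.log n)) ≤ MnPlus u}).toReal := by
  intro ε hε
  obtain ⟨κ, hκ, K, hK, hK₁, hKε⟩ := exists_inflation_pow_gt x hε
  have hblock := tendsto_blockBound x κ K
  have hbound := ((hblock.const_sub 1).pow K).sub (tendsto_edgeBound x)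
  rw [sub_zero] at hbound
  have hlog : Tendsto (fun n : ℕ => Real.log n) atTop atTop :=
    Real.tendsto_log_atTop.comp tendsto_natCast_atTop_atTop
  filter_upwards [hlog.eventually (eventually_levelRegime hx hκ),
    hlog.eventually (hblock.eventually_lt_const hK₁),
    hlog.eventually (hbound.eventually_const_lt hKε), eventually_gt_atTop 0]
    with n regime block_lt lt_bound hn
  exact lt_bound.le.trans (regime.pow_sub_le_measureReal_MnPlus hn hK block_lt.le le_rfl)
end
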